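/- arXiv:1406.1887 — 11 statements merged into one kernel-verified Lean document; each statement's English description precedes it below -/
import Mathlib

section
/- There exists n₀ such that for every odd n ≥ n₀ and every positive integer m the following holds: if F ⊆ 2^[n] is 2-Sperner and the number of members F ∈ F with |F| ∉ {⌊n/2⌋, ⌈n/2⌉} is at least m, then |F| ≤ Σ(n,2) − 1.9·m/n. -/
/-- A family is 2-Sperner if it contains no chain of three of its members. -/
def TwoSperner {n : ℕ} (F : Finset (Finset (Fin n))) : Prop :=
  ∀ A ∈ F, ∀ B ∈ F, ∀ C ∈ F, ¬ (A ⊂ B ∧ B ⊂ C)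

def Sigma2 (n : ℕ) : ℕ := n.choose (n / 2) + n.choose (n / 2 + 1)

theorem aux_low (k j : ℕ) (hj : j + 1 ≤ k) :
    (2*k+1).choose j * (k+2) ≤ (2*k+1).choose k * k := by
  have h1 := Nat.choose_succ_right_eq (2*k+1) j
  have h2 := Nat.choose_le_middle (j+1) (2*k+1)
  have h3 : (2*k+1)/2 = k := by omega
  rw [h3] at h2
  calc (2*k+1).choose j * (k+2) ≤ (2*k+1).choose j * (2*k+1 - j) :=
        Nat.mul_le_mul_left _ (by omega)
    _ = (2*k+1).choose (j+1) * (j+1) := h1.symm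
    _ ≤ _ := Nat.mul_le_mul h2 hj

theorem aux_out (k j : ℕ) (hj : j ≤ 2*k+1) (h1 : j ≠ k) (h2 : j ≠ k+1) :
    (2*k+1).choose j * (k+2) ≤ (2*k+1).choose k * k := by
  rcases lt_or_gt_of_ne h1 with h | h
  · exact aux_low k j h
  · rw [← Nat.choose_symm hj]
    exact aux_low k _ (by omega)

theorem aux_lym {n : ℕ} (F : Finset (Finset (Fin n))) (hF : TwoSperner F) :
    ∑ A ∈ F, ((n.choose A.card : ℕ) : ℝ)⁻¹ ≤ 2 := by
  classical
  rw [← Finset.sum_filter_add_sum_filter_not F (fun A => ∃ B ∈ F, B ⊂ A)]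
  have key : ∀ G : Finset (Finset (Fin n)), IsAntichain (· ⊆ ·) (SetLike.coe G) →
      ∑ A ∈ G, ((n.choose A.card : ℕ) : ℝ)⁻¹ ≤ 1 := by
    intro G hG
    have := Finset.lubell_yamamoto_meshalkin_inequality_sum_inv_choose (𝕜 := ℝ) hG
    simpa using this
  have a1 := key (F.filter (fun A => ∃ B ∈ F, B ⊂ A)) (by
    intro A hA B hB hne hAB
    have hA' := Finset.mem_filter.1 hA
    have hB' := Finset.mem_filter.1 hB
    obtain ⟨hAF, C, hC, hCA⟩ := hA'
    exact hF C hC A hAF B hB'.1 ⟨hCA, lt_of_le_of_ne hAB hne⟩)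
  have a2 := key (F.filter (fun A => ¬ ∃ B ∈ F, B ⊂ A)) (by
    intro A hA B hB hne hAB
    have hA' := Finset.mem_filter.1 hA
    have hB' := Finset.mem_filter.1 hB
    exact hB'.2 ⟨A, hA'.1, lt_of_le_of_ne hAB hne⟩)
  linarith

/-- For odd `n`: if `F` is 2-Sperner and at least `m` of its members have size different
from `⌊n/2⌋` and `⌈n/2⌉`, then `|F| ≤ Σ(n,2) − 1.9·m/n`. -/
theorem two_sperner_stab_odd_outside :
    ∃ n₀ : ℕ, ∀ n : ℕ, n₀ ≤ n → Odd n → ∀ m : ℕ, 1 ≤ m →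
      ∀ F : Finset (Finset (Fin n)), TwoSperner F →
      m ≤ (F.filter (fun A => A.card ≠ n / 2 ∧ A.card ≠ (n + 1) / 2)).card →
      (F.card : ℝ) ≤ (Sigma2 n : ℝ) - 1.9 * m / n := by
  refine ⟨3, ?_⟩
  rintro n hn ⟨k, rfl⟩ m hm F hF hcard
  have e1 : (2*k+1)/2 = k := by omega
  have e2 : (2*k+1+1)/2 = k+1 := by omega
  rw [e1, e2] at hcard
  have hk : 1 ≤ k := by omega
  have hk0 : (0:ℝ) < k := by exact_mod_cast hk
  have hN : (2*k+1).choose (k+1) = (2*k+1).choose k := by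
    apply Nat.choose_symm_of_eq_add; omega
  have hS : (Sigma2 (2*k+1) : ℝ) = 2 * ((2*k+1).choose k : ℕ) := by
    unfold Sigma2
    rw [e1, hN]; push_cast; ring
  have hl := aux_lym F hF
  have hp : ∀ A ∈ F, (1:ℝ) + (if A.card ≠ k ∧ A.card ≠ k+1 then 2/(k:ℝ) else 0) ≤
      ((2*k+1).choose k : ℕ) * (((2*k+1).choose A.card : ℕ) : ℝ)⁻¹ := by
    intro A _
    have hA : A.card ≤ 2*k+1 := by simpa using Finset.card_le_univ A
    have hpos : (0:ℝ) < (((2*k+1).choose A.card : ℕ) : ℝ) := by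
      exact_mod_cast Nat.choose_pos hA
    rw [← div_eq_mul_inv, le_div_iff₀ hpos]
    split_ifs with h
    · have h3 := aux_out k _ hA h.1 h.2
      have h4 : (((2*k+1).choose A.card : ℕ) : ℝ) * (k+2) ≤ ((2*k+1).choose k : ℕ) * k := by
        exact_mod_cast h3
      have h5 : (1 + 2/(k:ℝ)) * (((2*k+1).choose A.card : ℕ) : ℝ)
          = (((2*k+1).choose A.card : ℕ) : ℝ) * (k+2) / k := by
        field_simp
      rw [h5, div_le_iff₀ hk0]
      exact h4
    · have h3 := Nat.choose_le_middle A.card (2*k+1)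
      rw [e1] at h3
      rw [add_zero, one_mul]
      exact_mod_cast h3
  have hs := Finset.sum_le_sum hp
  rw [← Finset.mul_sum, Finset.sum_add_distrib, ← Finset.sum_filter, Finset.sum_const,
    Finset.sum_const, nsmul_eq_mul, nsmul_eq_mul, mul_one] at hs
  have hm' : (m:ℝ) ≤ ((F.filter (fun A => A.card ≠ k ∧ A.card ≠ k+1)).card : ℝ) := by
    exact_mod_cast hcard
  have hb : (((2*k+1).choose k : ℕ) : ℝ) * ∑ A ∈ F, (((2*k+1).choose A.card : ℕ) : ℝ)⁻¹
      ≤ ((2*k+1).choose k : ℕ) * 2 := mul_le_mul_of_nonneg_left hl (Nat.cast_nonneg _)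
  have hc : (m:ℝ) * (2/(k:ℝ)) ≤
      ((F.filter (fun A => A.card ≠ k ∧ A.card ≠ k+1)).card : ℝ) * (2/(k:ℝ)) :=
    mul_le_mul_of_nonneg_right hm' (by positivity)
  have hd : 1.9 * (m:ℝ) / ((2*k+1 : ℕ) : ℝ) ≤ (m:ℝ) * (2/(k:ℝ)) := by
    have hm0 : (0:ℝ) ≤ m := Nat.cast_nonneg _
    rw [← mul_div_assoc]
    push_cast
    apply div_le_div₀ <;> linarith
  rw [hS]
  linarith
end

section
/- There exists n₀ such that for every even n ≥ n₀ and every positive integer m the following holds: if F ⊆ 2^[n] is 2-Sperner and the number of members F ∈ F with |F| ∉ {n/2−1, n/2, n/2+1} is at least m, then |F| ≤ Σ(n,2) − 1.9·m/n. -/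
lemma two_sperner_lym {n : ℕ} (F : Finset (Finset (Fin n))) (hF : TwoSperner F) :
    ∑ A ∈ F, ((n.choose A.card : ℝ))⁻¹ ≤ 2 := by
  classical
  have key : ∀ G : Finset (Finset (Fin n)), (∀ A ∈ G, ∀ B ∈ G, ¬ A ⊂ B) →
      ∑ A ∈ G, ((n.choose A.card : ℝ))⁻¹ ≤ 1 := by
    intro G hG
    have h : IsAntichain (· ⊆ ·) (SetLike.coe G) := by
      intro A hA B hB hne hsub
      exact hG A hA B hB (lt_of_le_of_ne hsub hne)
    have := Finset.lubell_yamamoto_meshalkin_inequality_sum_inv_choose (𝕜 := ℝ) h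
    simpa using this
  rw [← Finset.sum_filter_add_sum_filter_not F (fun A => ∃ C ∈ F, C ⊂ A)]
  have h1 := key (F.filter (fun A => ∃ C ∈ F, C ⊂ A)) (by
    intro A hA B hB hAB
    rw [Finset.mem_filter] at hA hB
    obtain ⟨hA, C, hC, hCA⟩ := hA
    exact hF C hC A hA B hB.1 ⟨hCA, hAB⟩)
  have h2 := key (F.filter (fun A => ¬ ∃ C ∈ F, C ⊂ A)) (by
    intro A hA B hB hAB
    rw [Finset.mem_filter] at hA hB
    exact hB.2 ⟨A, hA.1, hAB⟩)
  linarith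

lemma choose_le_low (n j : ℕ) (hj : j ≤ n / 2) : ∀ i, i ≤ j → n.choose i ≤ n.choose j := by
  intro i hi
  induction j, hi using Nat.le_induction with
  | base => exact le_rfl
  | succ a ha ih => exact (ih (by omega)).trans (Nat.choose_le_succ_of_lt_half_left (by omega))

lemma choose_outside (j i : ℕ) (hi : i ≤ 2 * j + 4) (h : i ≤ j ∨ j + 4 ≤ i) :
    (2 * j + 4).choose i ≤ (2 * j + 4).choose (j + 4) := by
  have e : (2 * j + 4).choose (j + 4) = (2 * j + 4).choose j :=
    Nat.choose_symm_of_eq_add (by omega)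
  rw [e]
  rcases h with h | h
  · exact choose_le_low _ _ (by omega) _ h
  · rw [← Nat.choose_symm hi]
    exact choose_le_low _ _ (by omega) _ (by omega)

/-- For even `n`: if `F` is 2-Sperner and at least `m` of its members have size different
from `n/2 − 1`, `n/2` and `n/2 + 1`, then `|F| ≤ Σ(n,2) − 1.9·m/n`. -/
theorem two_sperner_stab_even_outside :
    ∃ n₀ : ℕ, ∀ n : ℕ, n₀ ≤ n → Even n → ∀ m : ℕ, 1 ≤ m →
      ∀ F : Finset (Finset (Fin n)), TwoSperner F →
      m ≤ (F.filter (fun A =>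
            A.card ≠ n / 2 - 1 ∧ A.card ≠ n / 2 ∧ A.card ≠ n / 2 + 1)).card →
      (F.card : ℝ) ≤ (Sigma2 n : ℝ) - 1.9 * m / n := by
  classical
  refine ⟨4, ?_⟩
  intro n hn hev m _ F hF hm
  obtain ⟨j, rfl⟩ : ∃ j, n = 2 * j + 4 := by
    obtain ⟨r, hr⟩ := hev
    exact ⟨r - 2, by omega⟩
  have hk : (2 * j + 4) / 2 = j + 2 := by omega
  have hlym := two_sperner_lym F hF
  simp only [Sigma2, hk] at hm ⊢
  have hk1 : j + 2 - 1 = j + 1 := by omega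
  rw [hk1] at hm
  have hout := choose_outside j
  have hmid : (2 * j + 4).choose (j + 3) ≤ (2 * j + 4).choose (j + 2) := by
    have := Nat.choose_le_middle (j + 3) (2 * j + 4)
    rwa [hk] at this
  have hrec := Nat.choose_succ_right_eq (2 * j + 4) (j + 3)
  have hsub : 2 * j + 4 - (j + 3) = j + 1 := by omega
  rw [hsub] at hrec
  have hsym : (2 * j + 4).choose (j + 1) = (2 * j + 4).choose (j + 3) :=
    Nat.choose_symm_of_eq_add (by omega)
  have hp0 : 0 < (2 * j + 4).choose (j + 2) := Nat.choose_pos (by omega)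
  have hp1 : 0 < (2 * j + 4).choose (j + 3) := Nat.choose_pos (by omega)
  have hp2 : 0 < (2 * j + 4).choose (j + 4) := Nat.choose_pos (by omega)
  have hf0 : (F.filter (fun A => A.card = j + 2)).card ≤ (2 * j + 4).choose (j + 2) := by
    have : F.filter (fun A => A.card = j + 2) ⊆ Finset.powersetCard (j + 2) Finset.univ := by
      intro A hA
      rw [Finset.mem_filter] at hA
      simp [Finset.mem_powersetCard, hA.2]
    have := Finset.card_le_card this
    simpa using this
  have h23 : j + 2 + 1 = j + 3 := rfl
  have h34 : j + 3 + 1 = j + 4 := rfl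
  rw [h23] at hm ⊢
  rw [h34] at hrec
  generalize hN0 : (2 * j + 4).choose (j + 2) = N0 at *
  generalize hN1 : (2 * j + 4).choose (j + 3) = N1 at *
  generalize hN2 : (2 * j + 4).choose (j + 4) = N2 at *
  have hN0p : (0 : ℝ) < N0 := by exact_mod_cast hp0
  have hN1p : (0 : ℝ) < N1 := by exact_mod_cast hp1
  have hN2p : (0 : ℝ) < N2 := by exact_mod_cast hp2
  have hjp : (0 : ℝ) < (j : ℝ) + 1 := by positivity
  have hratio : (N1 : ℝ) * (N2 : ℝ)⁻¹ = 1 + 3 / ((j : ℝ) + 1) := by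
    have : (N2 : ℝ) * (j + 4) = N1 * (j + 1) := by exact_mod_cast hrec
    field_simp
    linarith
  have hpt : ∀ A ∈ F, (1 : ℝ) ≤ N1 * ((2 * j + 4).choose A.card : ℝ)⁻¹
      + (1 - N1 * (N0 : ℝ)⁻¹) * (if A.card = j + 2 then 1 else 0)
      - 3 / ((j : ℝ) + 1) *
        (if A.card ≠ j + 1 ∧ A.card ≠ j + 2 ∧ A.card ≠ j + 3 then 1 else 0) := by
    intro A _
    have hA : A.card ≤ 2 * j + 4 := by simpa using Finset.card_le_univ A
    by_cases h0 : A.card = j + 2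
    · rw [h0, hN0]; simp
    by_cases h1 : A.card = j + 1
    · rw [h1, hsym]; simp [hN1p.ne']
    by_cases h2 : A.card = j + 3
    · rw [h2, hN1]; simp [hN1p.ne']
    rw [if_neg h0, if_pos ⟨h1, h0, h2⟩]
    have hc := hout A.card hA (by omega)
    have hcp : (0 : ℝ) < (2 * j + 4).choose A.card := by
      exact_mod_cast Nat.choose_pos hA
    have hc' : ((2 * j + 4).choose A.card : ℝ) ≤ N2 := by exact_mod_cast hc
    have hi : (N2 : ℝ)⁻¹ ≤ ((2 * j + 4).choose A.card : ℝ)⁻¹ := inv_anti₀ hcp hc'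
    have := mul_le_mul_of_nonneg_left hi hN1p.le
    linarith
  have hsum := Finset.sum_le_sum hpt
  rw [Finset.sum_sub_distrib, Finset.sum_add_distrib, ← Finset.mul_sum, ← Finset.mul_sum,
    ← Finset.mul_sum, Finset.sum_boole, Finset.sum_boole] at hsum
  simp only [Finset.sum_const, nsmul_eq_mul, mul_one] at hsum
  have hf0' : ((F.filter (fun A => A.card = j + 2)).card : ℝ) ≤ N0 := by exact_mod_cast hf0
  have hm' : (m : ℝ) ≤ ((F.filter (fun A =>
            A.card ≠ j + 1 ∧ A.card ≠ j + 2 ∧ A.card ≠ j + 3)).card : ℝ) := by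
    exact_mod_cast hm
  have hmid' : (N1 : ℝ) ≤ N0 := by exact_mod_cast hmid
  have hq : 0 ≤ 1 - N1 * (N0 : ℝ)⁻¹ := by
    rw [← div_eq_mul_inv, sub_nonneg, div_le_one hN0p]; exact hmid'
  have e1 := mul_le_mul_of_nonneg_left hlym hN1p.le
  have e2 := mul_le_mul_of_nonneg_left hf0' hq
  have e2' : (1 - N1 * (N0 : ℝ)⁻¹) * N0 = N0 - N1 := by field_simp
  have e3 := mul_le_mul_of_nonneg_left hm' (show 0 ≤ 3 / ((j : ℝ) + 1) by positivity)
  have e4 : 1.9 * (m : ℝ) / ((2 * j + 4 : ℕ) : ℝ) ≤ 3 / ((j : ℝ) + 1) * m := by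
    have : 1.9 / ((2 * j + 4 : ℕ) : ℝ) ≤ 3 / ((j : ℝ) + 1) := by
      push_cast
      rw [div_le_div_iff₀ (by positivity) hjp]
      have : (0 : ℝ) ≤ j := by positivity
      linarith
    have := mul_le_mul_of_nonneg_right this (Nat.cast_nonneg (α := ℝ) m)
    calc _ = 1.9 / ((2 * j + 4 : ℕ) : ℝ) * m := by ring
      _ ≤ _ := this
  push_cast at *
  linarith
end

section
/- Let n and k be integers with 1 ≤ ⌊n/2⌋ ≤ k ≤ n, and let G be a nonempty Sperner family of subsets of [n] with |F| ≥ k for every F ∈ G. Let x ≥ k−1 be the real number satisfying x(x−1)⋯(x−k+1)/k! = |G|. Then |Δ_{k−1}(G)| ≥ x(x−1)⋯(x−k+2)/(k−1)!. -/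
/-- The generalized binomial coefficient `C(x,j) = x(x−1)⋯(x−j+1)/j!` for real `x`. -/
noncomputable def genChoose (x : ℝ) (j : ℕ) : ℝ :=
  (descPochhammer ℝ j).eval x / (Nat.factorial j)

/-- The `j`-shadow of a family `G` of subsets of `[n]`. -/
def shadowAt (n j : ℕ) (G : Finset (Finset (Fin n))) : Finset (Finset (Fin n)) :=
  Finset.univ.filter (fun S => S.card = j ∧ ∃ F ∈ G, S ⊂ F)


theorem gc_zero (x : ℝ) : genChoose x 0 = 1 := by simp [genChoose]

theorem gc_succ (x : ℝ) (r : ℕ) : (r + 1) * genChoose x (r + 1) = (x - r) * genChoose x r := by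
  unfold genChoose
  rw [descPochhammer_succ_right, Nat.factorial_succ]
  have : (r.factorial : ℝ) ≠ 0 := by positivity
  simp only [Polynomial.eval_mul, Polynomial.eval_sub, Polynomial.eval_X, Polynomial.eval_natCast]
  push_cast
  field_simp

theorem gc_succ' (x : ℝ) (r : ℕ) : (r + 1) * genChoose x (r + 1) = x * genChoose (x - 1) r := by
  unfold genChoose
  rw [descPochhammer_succ_left, Nat.factorial_succ]
  have : (r.factorial : ℝ) ≠ 0 := by positivity
  simp only [Polynomial.eval_mul, Polynomial.eval_comp, Polynomial.eval_sub, Polynomial.eval_X,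
    Polynomial.eval_one]
  push_cast
  field_simp

theorem gc_nonneg (r : ℕ) (x : ℝ) (hx : (r : ℝ) - 1 ≤ x) : 0 ≤ genChoose x r := by
  induction r with
  | zero => simp [gc_zero]
  | succ r ih =>
    push_cast at hx
    have h := gc_succ x r
    have h0 := ih (by linarith)
    have h1 : 0 ≤ (x - r) * genChoose x r := mul_nonneg (by linarith) h0
    rw [← h] at h1
    exact nonneg_of_mul_nonneg_right h1 (by positivity)

theorem gc_mono (r : ℕ) (x y : ℝ) (hx : (r : ℝ) - 1 ≤ x) (hxy : x ≤ y) :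
    genChoose x r ≤ genChoose y r := by
  induction r with
  | zero => simp [gc_zero]
  | succ r ih =>
    push_cast at hx
    have h := gc_succ x r
    have h' := gc_succ y r
    have h0 := ih (by linarith)
    have h1 := gc_nonneg r x (by linarith)
    have h2 : (x - r) * genChoose x r ≤ (y - r) * genChoose y r :=
      mul_le_mul (by linarith) h0 h1 (by linarith)
    rw [← h, ← h'] at h2
    exact le_of_mul_le_mul_left h2 (by positivity)

theorem gc_cont (r : ℕ) : Continuous (fun x => genChoose x r) := by
  unfold genChoose
  exact (Polynomial.continuous _).div_const _

theorem gc_nat (r n : ℕ) : genChoose (n : ℝ) r = (n.choose r : ℝ) := by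
  unfold genChoose
  rw [descPochhammer_eval_eq_descFactorial, Nat.descFactorial_eq_factorial_mul_choose]
  push_cast
  have : (r.factorial : ℝ) ≠ 0 := by positivity
  field_simp

theorem choose_big (r m : ℕ) (hr : 1 ≤ r) : m + 1 ≤ (m + r).choose r := by
  induction m with
  | zero => simp
  | succ m ih =>
    obtain ⟨r, rfl⟩ := Nat.exists_eq_add_of_le' hr
    rw [show m + 1 + (r + 1) = (m + (r + 1)) + 1 by ring, Nat.choose_succ_succ]
    have : 0 < (m + (r + 1)).choose r := Nat.choose_pos (by omega)
    simp only [Nat.succ_eq_add_one]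
    omega

theorem gc_exists (r m : ℕ) (hr : 1 ≤ r) (hm : 1 ≤ m) :
    ∃ y : ℝ, (r : ℝ) ≤ y ∧ genChoose y r = m := by
  have h := intermediate_value_Icc (a := (r : ℝ)) (b := ((m + r : ℕ) : ℝ)) (by push_cast; linarith [(Nat.cast_nonneg m : (0:ℝ) ≤ m)])
    (gc_cont r).continuousOn
  have h2 : (m : ℝ) ∈ Set.Icc (genChoose (r : ℝ) r) (genChoose ((m + r : ℕ) : ℝ) r) := by
    rw [gc_nat, gc_nat]
    constructor
    · simpa using hm
    · exact_mod_cast (Nat.le_succ m).trans (choose_big r m hr)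
  obtain ⟨y, hy, hy2⟩ := h h2
  exact ⟨y, hy.1, hy2⟩

theorem sum_member {α : Type*} [DecidableEq α] [Fintype α] (r : ℕ) (H : Finset (Finset α))
    (hH : ∀ s ∈ H, s.card = r) : ∑ v, (H.memberSubfamily v).card = r * H.card := by
  have h1 : ∀ v, (H.memberSubfamily v).card = ∑ s ∈ H, if v ∈ s then 1 else 0 := by
    intro v
    rw [Finset.memberSubfamily, Finset.card_image_of_injOn, Finset.card_filter]
    exact (Finset.erase_injOn' v).mono (by intro s; simp)
  simp_rw [h1]
  rw [Finset.sum_comm]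
  have : ∀ s ∈ H, (∑ v, if v ∈ s then 1 else 0) = r := by
    intro s hs
    rw [← Finset.card_filter]
    simpa using hH s hs
  rw [Finset.sum_congr rfl this]
  simp [mul_comm]

theorem clique_bound {α : Type*} [DecidableEq α] [Fintype α] (r : ℕ) (hr : 1 ≤ r)
    (H T : Finset (Finset α)) (hH : ∀ s ∈ H, s.card = r) (hT : ∀ s ∈ T, s.card = r + 1)
    (hTH : ∀ t ∈ T, ∀ a ∈ t, t.erase a ∈ H) (x : ℝ) (hx : (r : ℝ) ≤ x)
    (hc : (H.card : ℝ) ≤ genChoose x r) : (T.card : ℝ) ≤ genChoose x (r + 1) := by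
  induction r generalizing H T x with
  | zero => omega
  | succ r ih =>
    push_cast at hx
    have hr0 : (0 : ℝ) ≤ r := Nat.cast_nonneg r
    have key : ∀ v, (r + 1) * ((T.memberSubfamily v).card : ℝ)
        ≤ (x - (r + 1)) * (H.memberSubfamily v).card := by
      intro v
      have hlink : ∀ t ∈ T.memberSubfamily v, ∀ a ∈ t, t.erase a ∈ H.memberSubfamily v := by
        intro t ht a ha
        rw [Finset.mem_memberSubfamily] at ht ⊢
        have hav : a ≠ v := fun h => ht.2 (h ▸ ha)
        refine ⟨?_, fun h => ht.2 (Finset.mem_of_mem_erase h)⟩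
        have := hTH _ ht.1 a (Finset.mem_insert_of_mem ha)
        rwa [Finset.erase_insert_of_ne hav.symm] at this
      have hTl : ∀ t ∈ T.memberSubfamily v, t.card = r + 1 := by
        intro t ht
        rw [Finset.mem_memberSubfamily] at ht
        have := hT _ ht.1
        rw [Finset.card_insert_of_notMem ht.2] at this
        omega
      have hHl : ∀ t ∈ H.memberSubfamily v, t.card = r := by
        intro t ht
        rw [Finset.mem_memberSubfamily] at ht
        have := hH _ ht.1
        rw [Finset.card_insert_of_notMem ht.2] at this
        omega
      have hsub : T.memberSubfamily v ⊆ H.nonMemberSubfamily v := by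
        intro t ht
        rw [Finset.mem_memberSubfamily] at ht
        rw [Finset.mem_nonMemberSubfamily]
        refine ⟨?_, ht.2⟩
        have := hTH _ ht.1 v (Finset.mem_insert_self _ _)
        rwa [Finset.erase_insert ht.2] at this
      have hcard := Finset.card_memberSubfamily_add_card_nonMemberSubfamily v H
      have hle := Finset.card_le_card hsub
      have hle2 : ((T.memberSubfamily v).card : ℝ) + (H.memberSubfamily v).card ≤ H.card := by
        exact_mod_cast (by omega)
      by_cases hbig : genChoose (x - 1) r ≤ ((H.memberSubfamily v).card : ℝ)
      · have h1 := gc_succ' x r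
        have h2 : x * genChoose (x - 1) r ≤ x * ((H.memberSubfamily v).card : ℝ) :=
          mul_le_mul_of_nonneg_left hbig (by linarith)
        have h3 : (r + 1 : ℝ) * (((T.memberSubfamily v).card : ℝ) + (H.memberSubfamily v).card)
            ≤ (r + 1) * genChoose x (r + 1) :=
          mul_le_mul_of_nonneg_left (hle2.trans hc) (by linarith)
        linarith
      · push Not at hbig
        rcases Nat.eq_zero_or_pos (H.memberSubfamily v).card with h0 | hpos
        · have : T.memberSubfamily v = ∅ := by
            rw [Finset.card_eq_zero] at h0
            rw [Finset.eq_empty_iff_forall_notMem]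
            intro t ht
            have hne : t.Nonempty := by
              rw [← Finset.card_pos, hTl t ht]; omega
            obtain ⟨a, ha⟩ := hne
            have := hlink t ht a ha
            simp [h0] at this
          simp [this, h0]
        · have hr1 : 1 ≤ r := by
            by_contra hcon
            have : r = 0 := by omega
            subst this
            rw [gc_zero] at hbig
            have : (1 : ℝ) ≤ ((H.memberSubfamily v).card : ℝ) := by exact_mod_cast hpos
            linarith
          obtain ⟨y, hy, hyc⟩ := gc_exists r _ hr1 hpos
          have hyx : y < x - 1 := by
            by_contra hcon
            push Not at hcon
            have := gc_mono r (x - 1) y (by linarith) hcon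
            linarith
          have h1 := ih hr1 _ _ hHl hTl hlink y hy hyc.ge
          have h2 := gc_succ y r
          rw [hyc] at h2
          have h3 : (y - r) * ((H.memberSubfamily v).card : ℝ)
              ≤ (x - (r + 1)) * ((H.memberSubfamily v).card : ℝ) :=
            mul_le_mul_of_nonneg_right (by linarith) (by positivity)
          have h4 := mul_le_mul_of_nonneg_left h1 (by linarith : (0 : ℝ) ≤ r + 1)
          linarith
    have hs := Finset.sum_le_sum (fun v (_ : v ∈ Finset.univ) => key v)
    rw [← Finset.mul_sum, ← Finset.mul_sum, ← Nat.cast_sum, ← Nat.cast_sum, sum_member _ _ hH,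
      sum_member _ _ hT] at hs
    push_cast at hs
    have h5 := gc_succ x (r + 1)
    push_cast at h5
    have h6 : (x - (r + 1)) * (H.card : ℝ) ≤ (x - (r + 1)) * genChoose x (r + 1) :=
      mul_le_mul_of_nonneg_left hc (by linarith)
    have h7 : (r + 1 : ℝ) * ((r + 1 + 1) * T.card) ≤ (r + 1) * ((x - (r + 1)) * H.card) := by
      linarith
    have h8 := le_of_mul_le_mul_left h7 (by positivity)
    have h9 : (r + 1 + 1 : ℝ) * T.card ≤ (r + 1 + 1) * genChoose x (r + 1 + 1) := by linarith
    exact le_of_mul_le_mul_left h9 (by positivity)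

theorem falling_card (n : ℕ) (G : Finset (Finset (Fin n)))
    (hsp : IsAntichain (· ⊆ ·) (G : Set (Finset (Fin n)))) (d j : ℕ) (hj : n / 2 ≤ j)
    (hd : n + 1 ≤ j + d) :
    (G.filter (fun s => j ≤ s.card)).card ≤ (Finset.falling j G).card := by
  induction d generalizing j with
  | zero =>
    have : G.filter (fun s => j ≤ s.card) = ∅ := by
      rw [Finset.filter_eq_empty_iff]
      intro s _
      have := Finset.card_le_univ s
      simp at this
      omega
    simp [this]
  | succ d ih =>
    have h1 := ih (j + 1) (by omega) (by omega)
    have h2 := Finset.slice_union_shadow_falling_succ (k := j) (𝒜 := G)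
    have h3 := Finset.IsAntichain.disjoint_slice_shadow_falling (m := j) (n := j + 1) hsp
    rw [← h2, Finset.card_union_of_disjoint h3]
    have h4 := Finset.local_lubell_yamamoto_meshalkin_inequality_mul
      (Finset.sized_falling (k := j + 1) (𝒜 := G))
    rw [Fintype.card_fin] at h4
    have h5 : (Finset.falling (j + 1) G).card ≤ (Finset.shadow (Finset.falling (j + 1) G)).card := by
      refine Nat.le_of_mul_le_mul_right (h4.trans (Nat.mul_le_mul_left _ ?_)) (Nat.succ_pos j)
      omega
    have h6 : (G.filter (fun s => j ≤ s.card)) ⊆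
        G.slice j ∪ G.filter (fun s => j + 1 ≤ s.card) := by
      intro s hs
      simp only [Finset.mem_filter, Finset.mem_union, Finset.mem_slice] at hs ⊢
      rcases hs.2.eq_or_lt with h | h
      · exact Or.inl ⟨hs.1, h.symm⟩
      · exact Or.inr ⟨hs.1, h⟩
    have := (Finset.card_le_card h6).trans (Finset.card_union_le _ _)
    omega

theorem shadow_bound (n k : ℕ) (h1 : 1 ≤ n / 2) (h2 : n / 2 ≤ k) (h3 : k ≤ n)
    (G : Finset (Finset (Fin n))) (hne : G.Nonempty)
    (hsp : IsAntichain (· ⊆ ·) (G : Set (Finset (Fin n))))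
    (hsize : ∀ F ∈ G, k ≤ F.card)
    (x : ℝ) (hx : (k : ℝ) - 1 ≤ x) (hxc : genChoose x k = G.card) :
    genChoose x (k - 1) ≤ ((shadowAt n (k - 1) G).card : ℝ) := by
  obtain ⟨r, rfl⟩ := Nat.exists_eq_add_of_le' (h1.trans h2)
  rw [Nat.add_sub_cancel]
  push_cast at hx
  have hF := falling_card n G hsp (n + 1) (r + 1) h2 (by omega)
  rw [Finset.filter_true_of_mem hsize] at hF
  set F := Finset.falling (r + 1) G with hFdef
  have hTH : ∀ t ∈ F, ∀ a ∈ t, t.erase a ∈ shadowAt n r G := by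
    intro t ht a ha
    rw [hFdef, Finset.mem_falling] at ht
    obtain ⟨⟨s, hs, hts⟩, hc⟩ := ht
    simp only [shadowAt, Finset.mem_filter, Finset.mem_univ, true_and]
    refine ⟨by rw [Finset.card_erase_of_mem ha, hc]; rfl, s, hs, ?_⟩
    exact (Finset.erase_ssubset ha).trans_subset hts
  have hFne : 0 < F.card := (Finset.card_pos.2 hne).trans_le hF
  have hHpos : 1 ≤ (shadowAt n r G).card := by
    obtain ⟨t, ht⟩ := Finset.card_pos.1 hFne
    have hc := (Finset.mem_falling.1 ht).2
    obtain ⟨a, ha⟩ : t.Nonempty := by rw [← Finset.card_pos, hc]; omega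
    exact Finset.card_pos.2 ⟨_, hTH t ht a ha⟩
  rcases Nat.eq_zero_or_pos r with h0 | hr
  · subst h0
    rw [gc_zero]
    exact_mod_cast hHpos
  by_contra hcon
  push Not at hcon
  obtain ⟨y, hy, hyc⟩ := gc_exists r _ hr hHpos
  have hyx : y < x := by
    by_contra hc
    push Not at hc
    have := gc_mono r x y (by linarith) hc
    linarith
  have hb := clique_bound r hr (shadowAt n r G) F
    (fun s hs => (Finset.mem_filter.1 hs).2.1) (fun s hs => (Finset.mem_falling.1 hs).2)
    hTH y hy hyc.ge
  have hGF : (G.card : ℝ) ≤ F.card := by exact_mod_cast hF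
  have e1 := gc_succ y r
  have e2 := gc_succ x r
  have e3 : (y - r) * genChoose y r < (x - r) * genChoose x r :=
    mul_lt_mul'' (by linarith) (by linarith) (by linarith) (gc_nonneg r y (by linarith))
  have e4 : genChoose y (r + 1) < genChoose x (r + 1) := by
    rw [← e1, ← e2] at e3
    exact lt_of_mul_lt_mul_left e3 (by positivity)
  linarith
end

section
/- Let n and k be integers with 1 ≤ k ≤ ⌈n/2⌉ and k+1 ≤ n, and let G be a nonempty Sperner family of subsets of [n] with |F| ≤ k for every F ∈ G. Let x ≥ n−k−1 be the real number satisfying C(x, n−k) = |G|. Then the shade satisfies |∇_{k+1}(G)| ≥ C(x, n−k−1). -/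
/-- The `j`-shade of a family `G` of subsets of `[n]`. -/
def shadeAt (n j : ℕ) (G : Finset (Finset (Fin n))) : Finset (Finset (Fin n)) :=
  Finset.univ.filter (fun S => S.card = j ∧ ∃ F ∈ G, F ⊂ S)

open Finset Finset.Colex
open scoped FinsetFamily

lemma genChoose_pascal (x : ℝ) (r : ℕ) :
    genChoose x (r + 1) = genChoose (x - 1) r + genChoose (x - 1) (r + 1) := by
  have h1 : (descPochhammer ℝ (r + 1)).eval x = x * (descPochhammer ℝ r).eval (x - 1) := by
    rw [descPochhammer_succ_left]; simp
  have h2 : (descPochhammer ℝ (r + 1)).eval (x - 1)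
      = (descPochhammer ℝ r).eval (x - 1) * (x - 1 - r) := by
    rw [descPochhammer_succ_eval]
  unfold genChoose
  rw [h1, h2, Nat.factorial_succ]
  have : (Nat.factorial r : ℝ) ≠ 0 := by exact_mod_cast Nat.factorial_ne_zero r
  have h3 : (r : ℝ) + 1 ≠ 0 := by positivity
  push_cast
  field_simp
  ring

lemma genChoose_mono (r : ℕ) {x y : ℝ} (hx : (r : ℝ) - 1 ≤ x) (h : x ≤ y) :
    genChoose x r ≤ genChoose y r := by
  unfold genChoose
  have := monotoneOn_descPochhammer_eval (S := ℝ) r hx (hx.trans h) h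
  gcongr

lemma genChoose_nonneg (r : ℕ) {x : ℝ} (hx : (r : ℝ) - 1 ≤ x) : 0 ≤ genChoose x r := by
  unfold genChoose
  have := descPochhammer_nonneg (S := ℝ) (n := r) (s := x) hx
  positivity

lemma genChoose_self (r : ℕ) : genChoose r r = 1 := by
  unfold genChoose
  rw [descPochhammer_eval_eq_descFactorial, Nat.descFactorial_self]
  exact div_self (by exact_mod_cast Nat.factorial_ne_zero r)

lemma exists_initSeg_card {n : ℕ} (r m : ℕ) (hm : m ≤ n.choose r) :
    ∃ C : Finset (Finset (Fin n)), IsInitSeg C r ∧ #C = m := by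
  induction m with
  | zero => exact ⟨∅, isInitSeg_empty, rfl⟩
  | succ m ih =>
    obtain ⟨C, hC, hCm⟩ := ih (by omega)
    have hne : (powersetCard r (univ : Finset (Fin n)) \ C).Nonempty := by
      rw [← card_pos]
      have := le_card_sdiff C (powersetCard r (univ : Finset (Fin n)))
      simp at this
      omega
    obtain ⟨s, hs, hmin⟩ := exists_min_image _ (fun s => toColex s) hne
    simp only [mem_sdiff, mem_powersetCard, subset_univ, true_and] at hs hmin
    refine ⟨insert s C, ⟨?_, ?_⟩, ?_⟩
    · intro t ht
      simp only [coe_insert, Set.mem_insert_iff, mem_coe] at ht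
      rcases ht with rfl | ht
      · exact hs.1
      · exact hC.1 ht
    · rintro t u ht ⟨hlt, hu⟩
      rw [mem_insert] at ht ⊢
      right
      rcases ht with rfl | ht
      · by_contra hcon
        exact absurd hlt (not_lt.2 (hmin u ⟨hu, hcon⟩))
      · exact hC.2 ht ⟨hlt, hu⟩
    · rw [card_insert_of_notMem hs.2, hCm]

lemma initSeg_shift {n r : ℕ} {A : Finset (Finset (Fin (n + 1)))} (hA : IsInitSeg A r)
    {F : Finset (Fin (n + 1))} (hF : F ∈ A) (h0 : 0 ∉ F) {i : Fin (n + 1)} (hi : i ∈ F) :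
    insert 0 (F.erase i) ∈ A := by
  have h0' : (0 : Fin (n+1)) ∉ F.erase i := fun h => h0 (mem_of_mem_erase h)
  refine hA.2 hF ⟨?_, ?_⟩
  · have h := (insert_lt_insert (s := F.erase i) (a := 0) (b := i) h0' (by simp)).2
      (by
        rcases Fin.eq_zero_or_eq_succ i with rfl | ⟨j, rfl⟩
        · exact absurd hi h0
        · exact Fin.succ_pos j)
    rwa [insert_erase hi] at h
  · rw [card_insert_of_notMem h0', card_erase_add_one hi, hA.1 hF]

/-- Lovász form of Kruskal-Katona with a real parameter. -/
lemma lovasz_real {n : ℕ} (r : ℕ) : ∀ (m : ℕ) (A : Finset (Finset (Fin (n + 1)))), #A = m →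
    (A : Set (Finset (Fin (n + 1)))).Sized (r + 1) → A.Nonempty → ∀ x : ℝ, (r : ℝ) ≤ x →
    genChoose x (r + 1) ≤ #A → genChoose x r ≤ #(∂ A) := by
  induction r with
  | zero =>
    intro m A _ hs hne x _ _
    obtain ⟨F, hF⟩ := hne
    have hc := hs hF
    obtain ⟨a, ha⟩ := card_pos.1 (by omega : 0 < #F)
    have : 0 < #(∂ A) := card_pos.2 ⟨_, erase_mem_shadow hF ha⟩
    simp only [genChoose, descPochhammer_zero, Polynomial.eval_one, Nat.factorial_zero,
      Nat.cast_one, div_one]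
    exact_mod_cast this
  | succ r ihr =>
    intro m
    induction m using Nat.strong_induction_on with
    | _ m ihm =>
    intro A hm hs hne
    suffices H : ∀ x : ℝ, (r : ℝ) + 2 ≤ x → genChoose x (r + 1 + 1) ≤ #A →
        genChoose x (r + 1) ≤ #(∂ A) by
      intro x hx hxA
      by_cases hx2 : (r : ℝ) + 2 ≤ x
      · exact H x hx2 hxA
      · push Not at hx2
        have h1 : genChoose ((r : ℝ) + 2) (r + 1 + 1) = 1 := by
          have := genChoose_self (r + 2)
          push_cast at this
          exact this
        refine (genChoose_mono (r + 1) ?_ hx2.le).trans (H _ le_rfl ?_)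
        · push_cast at hx ⊢; linarith
        · rw [h1]; exact_mod_cast card_pos.2 hne
    intro x hx hxA
    have hcard : #A ≤ (n + 1).choose (r + 1 + 1) := by simpa using hs.card_le
    obtain ⟨C, hC, hCm⟩ := exists_initSeg_card (n := n + 1) (r + 1 + 1) (#A) hcard
    have hKK := kruskal_katona hs hCm.le hC
    rw [← hCm] at hxA
    refine le_trans ?_ (Nat.cast_le.2 hKK)
    have hCne : C.Nonempty := card_pos.1 (by rw [hCm]; exact card_pos.2 hne)
    set C1 := C.memberSubfamily 0 with hC1
    set C0 := C.nonMemberSubfamily 0 with hC0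
    have hsum : #C1 + #C0 = #C := card_memberSubfamily_add_card_nonMemberSubfamily 0 C
    have hC1s : (C1 : Set (Finset (Fin (n + 1)))).Sized (r + 1) := by
      intro s hs'
      rw [mem_coe, hC1, mem_memberSubfamily] at hs'
      have := hC.1 hs'.1
      rw [card_insert_of_notMem hs'.2] at this
      omega
    have hC0s : (C0 : Set (Finset (Fin (n + 1)))).Sized (r + 1 + 1) := by
      intro s hs'
      rw [mem_coe, hC0, mem_nonMemberSubfamily] at hs'
      exact hC.1 hs'.1
    have hsub : ∂ C0 ⊆ C1 := by
      intro t ht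
      rw [mem_shadow_iff] at ht
      obtain ⟨s, hs', a, ha, rfl⟩ := ht
      rw [hC0, mem_nonMemberSubfamily] at hs'
      rw [hC1, mem_memberSubfamily]
      exact ⟨initSeg_shift hC hs'.1 hs'.2 ha, fun h => hs'.2 (mem_of_mem_erase h)⟩
    have hC1ne : C1.Nonempty := by
      obtain ⟨F, hF⟩ := hCne
      by_cases h0 : (0 : Fin (n + 1)) ∈ F
      · refine ⟨F.erase 0, ?_⟩
        rw [hC1, mem_memberSubfamily, insert_erase h0]
        exact ⟨hF, by simp⟩
      · have hc := hC.1 hF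
        obtain ⟨a, ha⟩ := card_pos.1 (by omega : 0 < #F)
        exact ⟨_, hsub (erase_mem_shadow (mem_nonMemberSubfamily.2 ⟨hF, h0⟩) ha)⟩
    have hC1pos := card_pos.2 hC1ne
    have hbig : genChoose (x - 1) (r + 1) ≤ #C1 := by
      by_contra hcon
      push Not at hcon
      have hp := genChoose_pascal x (r + 1)
      have hsumR : (#C1 : ℝ) + #C0 = #C := by exact_mod_cast hsum
      have hC0big : genChoose (x - 1) (r + 1 + 1) < #C0 := by linarith
      have hnn : 0 ≤ genChoose (x - 1) (r + 1 + 1) :=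
        genChoose_nonneg _ (by push_cast; linarith)
      have hC0pos : 0 < #C0 := by exact_mod_cast hnn.trans_lt hC0big
      have := ihm #C0 (by omega) C0 rfl hC0s (card_pos.1 hC0pos) (x - 1)
        (by push_cast; linarith) hC0big.le
      have h2 : (#(∂ C0) : ℝ) ≤ #C1 := by exact_mod_cast card_le_card hsub
      linarith
    have hsh := ihr _ C1 rfl hC1s hC1ne (x - 1) (by linarith) hbig
    have h0C1 : ∀ t ∈ ∂ C1, (0 : Fin (n + 1)) ∉ t := by
      intro t ht h
      obtain ⟨s, hs', a, ha, rfl⟩ := mem_shadow_iff.1 ht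
      exact (mem_memberSubfamily.1 hs').2 (mem_of_mem_erase h)
    have hfin : #C1 + #(∂ C1) ≤ #(∂ C) := by
      have himg : #((∂ C1).image (insert 0)) = #(∂ C1) := by
        apply card_image_of_injOn
        intro s hs' t ht hst
        have := congrArg (fun u => erase u 0) hst
        simpa [erase_insert (h0C1 s hs'), erase_insert (h0C1 t ht)] using this
      rw [← himg, ← card_union_of_disjoint]
      · apply card_le_card
        intro t ht
        rw [mem_union, mem_image] at ht
        rcases ht with ht | ⟨u, hu, rfl⟩
        · have ht := mem_memberSubfamily.1 ht
          exact mem_shadow_iff_insert_mem.2 ⟨0, ht.2, ht.1⟩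
        · obtain ⟨a, ha, hau⟩ := mem_shadow_iff_insert_mem.1 hu
          have hm' := mem_memberSubfamily.1 hau
          refine mem_shadow_iff_insert_mem.2 ⟨a, ?_, ?_⟩
          · intro h
            rcases mem_insert.1 h with rfl | h
            · exact hm'.2 (mem_insert_self _ _)
            · exact ha h
          · rw [insert_comm]; exact hm'.1
      · rw [disjoint_left]
        intro t ht ht'
        obtain ⟨u, _, rfl⟩ := mem_image.1 ht'
        exact (mem_memberSubfamily.1 ht).2 (mem_insert_self _ _)
    rw [genChoose_pascal x r]
    have : (#C1 : ℝ) + #(∂ C1) ≤ #(∂ C) := by exact_mod_cast hfin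
    linarith

lemma card_falling_ge {n k : ℕ} (h2 : k ≤ (n + 1) / 2) (H : Finset (Finset (Fin n)))
    (hsp : IsAntichain (· ⊆ ·) (H : Set (Finset (Fin n)))) (j : ℕ) (hj : j ≤ k) (hkn : k ≤ n) :
    #(H.filter (fun s => n - j ≤ #s)) ≤ #(falling (n - j) H) := by
  induction j with
  | zero =>
    refine card_le_card fun s hs => ?_
    rw [mem_filter] at hs
    have : #s ≤ n := by simpa using card_le_univ s
    exact mem_falling.2 ⟨⟨s, hs.1, Subset.refl _⟩, by omega⟩
  | succ j ih =>
    have ih := ih (by omega)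
    have hl := local_lubell_yamamoto_meshalkin_inequality_mul (sized_falling (n - j) H)
    rw [Fintype.card_fin] at hl
    have hge : #(falling (n - j) H) ≤ #(∂ (falling (n - j) H)) := by
      have : #(falling (n - j) H) * (n - j) ≤ #(∂ (falling (n - j) H)) * (n - j) :=
        hl.trans (Nat.mul_le_mul_left _ (by omega))
      exact Nat.le_of_mul_le_mul_right this (by omega)
    rw [← slice_union_shadow_falling_succ,
      card_union_of_disjoint (IsAntichain.disjoint_slice_shadow_falling hsp)]
    have e : n - (j + 1) + 1 = n - j := by omega
    rw [e]
    have hsub : H.filter (fun s => n - (j + 1) ≤ #s) ⊆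
        (H # (n - (j + 1))) ∪ H.filter (fun s => n - j ≤ #s) := by
      intro s hs
      rw [mem_filter] at hs
      rw [mem_union, mem_slice, mem_filter]
      by_cases h : #s = n - (j + 1)
      · exact Or.inl ⟨hs.1, h⟩
      · exact Or.inr ⟨hs.1, by omega⟩
    have := (card_le_card hsub).trans (card_union_le _ _)
    omega

theorem shade_bound (n k : ℕ) (h1 : 1 ≤ k) (h2 : k ≤ (n + 1) / 2) (h3 : k + 1 ≤ n)
    (G : Finset (Finset (Fin n))) (hne : G.Nonempty)
    (hsp : IsAntichain (· ⊆ ·) (G : Set (Finset (Fin n))))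
    (hsize : ∀ F ∈ G, F.card ≤ k)
    (x : ℝ) (hx : (n : ℝ) - k - 1 ≤ x) (hxc : genChoose x (n - k) = G.card) :
    genChoose x (n - k - 1) ≤ ((shadeAt n (k + 1) G).card : ℝ) := by
  obtain ⟨m, rfl⟩ : ∃ m, n = m + 1 := ⟨n - 1, by omega⟩
  obtain ⟨r, hr⟩ : ∃ r, m + 1 - k = r + 1 := ⟨m - k, by omega⟩
  have hspH : IsAntichain (· ⊆ ·) ((Gᶜˢ : Finset (Finset (Fin (m + 1)))) : Set (Finset (Fin (m + 1)))) := by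
    intro s hs t ht hst hle
    rw [mem_coe, mem_compls] at hs ht
    exact hsp ht hs (fun h => hst (compl_injective h.symm)) (compl_subset_compl.2 hle)
  have hcf := card_falling_ge h2 Gᶜˢ hspH k le_rfl (by omega)
  have hfilt : (Gᶜˢ).filter (fun s => m + 1 - k ≤ #s) = Gᶜˢ := by
    rw [filter_eq_self]
    intro s hs
    have := hsize _ (mem_compls.1 hs)
    rw [card_compl, Fintype.card_fin] at this
    omega
  rw [hfilt, card_compls, hr] at hcf
  rw [hr] at hxc
  have hrr : m + 1 - k - 1 = r := by omega
  rw [hrr]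
  have hrR : (r : ℝ) = ((m + 1 : ℕ) : ℝ) - k - 1 := by
    have : m + 1 = r + 1 + k := by omega
    rw [this]; push_cast; ring
  have hmain := lovasz_real r _ (falling (r + 1) Gᶜˢ) rfl (sized_falling _ _)
    (card_pos.1 (lt_of_lt_of_le (card_pos.2 hne) hcf)) x (by rw [hrR]; exact hx)
    (by rw [hxc]; exact_mod_cast hcf)
  refine hmain.trans ?_
  rw [← card_compls (∂ (falling (r + 1) Gᶜˢ))]
  refine Nat.cast_le.2 (card_le_card fun S hS => ?_)
  rw [mem_compls, mem_shadow_iff_insert_mem] at hS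
  obtain ⟨a, ha, haS⟩ := hS
  obtain ⟨⟨T, hT, hsT⟩, hc⟩ := mem_falling.1 haS
  rw [mem_compls] at hT
  rw [card_insert_of_notMem ha, card_compl, Fintype.card_fin] at hc
  have hSc : #S ≤ m + 1 := by simpa using card_le_univ S
  have hS1 : #S = k + 1 := by omega
  refine mem_filter.2 ⟨mem_univ _, hS1, Tᶜ, hT, ?_⟩
  have hsub : Tᶜ ⊆ S := by
    rw [← compl_subset_compl, compl_compl]
    exact (subset_insert _ _).trans hsT
  refine hsub.ssubset_of_ne fun h => ?_
  have := hsize _ hT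
  rw [h] at this
  omega
end

section
/- Let l ≥ 2 be an integer and let m₁, m₂ > 0 be reals with m = m₁ + m₂. If x(l,m) ≤ 2l − 1, then g(l,m₁) + g(l,m₂) ≥ g(l,m). -/
attribute [local instance] Classical.propDecidable

/-- `x(l,m)`: the unique real `x ≥ l−1` with `C(x,l) = m` (for `m > 0`). -/
noncomputable def xval (l : ℕ) (m : ℝ) : ℝ :=
  if h : ∃ x : ℝ, (l : ℝ) - 1 ≤ x ∧ genChoose x l = m then h.choose else 0

/-- `g(l,m) = C(x(l,m), l−1) − C(x(l,m), l)`. -/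
noncomputable def gval (l : ℕ) (m : ℝ) : ℝ :=
  genChoose (xval l m) (l - 1) - genChoose (xval l m) l

theorem xval_spec (l : ℕ) (hl : 2 ≤ l) (m : ℝ) (hm : 0 < m) :
    (l : ℝ) - 1 ≤ xval l m ∧ genChoose (xval l m) l = m := by
  have hf : (0 : ℝ) < (Nat.factorial l : ℝ) := by exact_mod_cast Nat.factorial_pos l
  have h : ∃ x : ℝ, (l : ℝ) - 1 ≤ x ∧ genChoose x l = m := by
    have hcont : Continuous (fun x : ℝ => genChoose x l) := by
      unfold genChoose
      exact (Polynomial.continuous _).div_const _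
    set t : ℝ := max 1 (m * (Nat.factorial l : ℝ)) with ht
    have ht1 : 1 ≤ t := le_max_left _ _
    have ht2 : m * (Nat.factorial l : ℝ) ≤ t := le_max_right _ _
    have hle : (l : ℝ) - 1 ≤ (l : ℝ) - 1 + t := by linarith
    have h0 : genChoose ((l : ℝ) - 1) l = 0 := by
      have := descPochhammer_eval_coe_nat_of_lt (R := ℝ) (show l - 1 < l by omega)
      rw [Nat.cast_sub (by omega), Nat.cast_one] at this
      simp [genChoose, this]
    have h1 : m ≤ genChoose ((l : ℝ) - 1 + t) l := by
      unfold genChoose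
      rw [le_div_iff₀ hf]
      have := pow_le_descPochhammer_eval (n := l) (s := (l : ℝ) - 1 + t) hle
      have h3 : (l : ℝ) - 1 + t - l + 1 = t := by ring
      rw [h3] at this
      have h4 : t ≤ t ^ l := le_self_pow₀ ht1 (by omega)
      linarith
    obtain ⟨x, hx, hx'⟩ := intermediate_value_Icc hle hcont.continuousOn
      (show m ∈ Set.Icc _ _ from ⟨by simp only [h0]; exact hm.le, h1⟩)
    exact ⟨x, hx.1, hx'⟩
  unfold xval
  rw [dif_pos h]
  exact h.choose_spec

theorem genChoose_rec (l : ℕ) (hl : 2 ≤ l) (x : ℝ) :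
    genChoose x l * l = genChoose x (l - 1) * (x - l + 1) := by
  obtain ⟨k, rfl⟩ : ∃ k, l = k + 1 := ⟨l - 1, by omega⟩
  have hf : (Nat.factorial k : ℝ) ≠ 0 := by exact_mod_cast Nat.factorial_ne_zero k
  have hk : ((k : ℝ) + 1) ≠ 0 := by positivity
  simp only [genChoose, Nat.add_sub_cancel, descPochhammer_succ_eval, Nat.factorial_succ]
  push_cast
  field_simp
  ring

theorem xval_lt (l : ℕ) (hl : 2 ≤ l) (m : ℝ) (hm : 0 < m) : 0 < xval l m - l + 1 := by
  obtain ⟨h1, h2⟩ := xval_spec l hl m hm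
  rcases h1.lt_or_eq with h | h
  · linarith
  · exfalso
    have := genChoose_rec l hl (xval l m)
    have h0 : xval l m - l + 1 = 0 := by linarith
    rw [h2, h0, mul_zero] at this
    have : 0 < m * (l : ℝ) := mul_pos hm (by exact_mod_cast (by omega : 0 < l))
    linarith

theorem gval_eq (l : ℕ) (hl : 2 ≤ l) (m : ℝ) (hm : 0 < m) :
    gval l m = m * (l / (xval l m - l + 1)) - m := by
  have h := genChoose_rec l hl (xval l m)
  have hp := xval_lt l hl m hm
  have h2 := (xval_spec l hl m hm).2
  unfold gval
  rw [h2] at h ⊢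
  rw [← mul_div_assoc, h, mul_div_cancel_right₀ _ hp.ne']

theorem xval_mono (l : ℕ) (hl : 2 ≤ l) (a b : ℝ) (ha : 0 < a) (hab : a < b) :
    xval l a ≤ xval l b := by
  by_contra! hc
  obtain ⟨p1, p2⟩ := xval_spec l hl a ha
  obtain ⟨q1, q2⟩ := xval_spec l hl b (ha.trans hab)
  have := monotoneOn_descPochhammer_eval (S := ℝ) l (show xval l b ∈ Set.Ici _ from q1)
    (show xval l a ∈ Set.Ici _ from p1) hc.le
  have h3 : genChoose (xval l b) l ≤ genChoose (xval l a) l := by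
    unfold genChoose
    gcongr
  linarith

theorem gval_ge (l : ℕ) (hl : 2 ≤ l) (a b : ℝ) (ha : 0 < a) (hab : a < b) :
    a * (l / (xval l b - l + 1)) - a ≤ gval l a := by
  rw [gval_eq l hl a ha]
  have h1 := xval_mono l hl a b ha hab
  have h2 := xval_lt l hl a ha
  gcongr

/-- Superadditivity: if `m = m₁ + m₂` and `x(l,m) ≤ 2l − 1`, then
`g(l,m₁) + g(l,m₂) ≥ g(l,m)`. -/
theorem gval_superadditive (l : ℕ) (hl : 2 ≤ l) (m₁ m₂ : ℝ) (h₁ : 0 < m₁) (h₂ : 0 < m₂)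
    (hx : xval l (m₁ + m₂) ≤ 2 * (l : ℝ) - 1) :
    gval l (m₁ + m₂) ≤ gval l m₁ + gval l m₂ := by
  have e1 := gval_ge l hl m₁ (m₁ + m₂) h₁ (by linarith)
  have e2 := gval_ge l hl m₂ (m₁ + m₂) h₂ (by linarith)
  rw [gval_eq l hl (m₁ + m₂) (by linarith), add_mul]
  linarith
end

section
/- Let l ≥ 2 be an integer and let m be a real with 1 ≤ m ≤ C(2l−1, l). Then g(l,m) ≤ g(l+1,m). -/
attribute [local instance] Classical.propDecidable

lemma aux_asc (n : ℕ) (b : ℝ) : (ascPochhammer ℝ (n+1)).eval b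
    = b * (n.factorial : ℝ) * ∏ i ∈ Finset.range n, (1 + b / ((i:ℝ)+1)) := by
  induction n with
  | zero => simp
  | succ n ih =>
    rw [ascPochhammer_succ_eval, ih, Finset.prod_range_succ, Nat.factorial_succ]
    have : (n:ℝ) + 1 ≠ 0 := by positivity
    push_cast
    field_simp
    ring

lemma aux_gen (n : ℕ) (x : ℝ) : genChoose x (n+1)
    = (x - n) / ((n:ℝ)+1) * ∏ i ∈ Finset.range n, (1 + (x - n) / ((i:ℝ)+1)) := by
  unfold genChoose
  rw [descPochhammer_eval_eq_ascPochhammer]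
  have h : x - ((n+1 : ℕ) : ℝ) + 1 = x - n := by push_cast; ring
  rw [h, aux_asc, Nat.factorial_succ]
  have : (n:ℝ) + 1 ≠ 0 := by positivity
  have : (n.factorial:ℝ) ≠ 0 := by positivity
  push_cast
  field_simp

lemma aux_step (n : ℕ) (x : ℝ) :
    genChoose x (n+1) * ((n:ℝ)+1) = genChoose x n * (x - n) := by
  unfold genChoose
  rw [descPochhammer_succ_eval, Nat.factorial_succ]
  have : (n:ℝ) + 1 ≠ 0 := by positivity
  have : (n.factorial:ℝ) ≠ 0 := by positivity
  push_cast
  field_simp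

lemma aux_xval (n : ℕ) (m : ℝ) (hm : 0 < m) :
    0 < xval (n+1) m - n ∧ genChoose (xval (n+1) m) (n+1) = m := by
  have hex : ∃ x : ℝ, ((n+1 : ℕ) : ℝ) - 1 ≤ x ∧ genChoose x (n+1) = m := by
    have hcont : Continuous (fun x : ℝ => genChoose x (n+1)) := by
      unfold genChoose
      fun_prop
    have hle : (n:ℝ) ≤ n + m * (n+1) := by
      have : 0 ≤ m * ((n:ℝ)+1) := by positivity
      linarith
    have hiv := intermediate_value_Icc hle hcont.continuousOn
    have hmem : m ∈ Set.Icc (genChoose (n:ℝ) (n+1)) (genChoose ((n:ℝ) + m * (n+1)) (n+1)) := by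
      constructor
      · rw [aux_gen]; simp [hm.le]
      · rw [aux_gen]
        have h0 : (n:ℝ) + 1 ≠ 0 := by positivity
        have e : ((n:ℝ) + m * (n+1) - n) = m * (n+1) := by ring
        rw [e, mul_div_cancel_right₀ _ h0]
        apply le_mul_of_one_le_right hm.le
        refine (Finset.prod_const_one (s := Finset.range n)).symm.le.trans ?_
        refine Finset.prod_le_prod (fun i _ => zero_le_one) ?_
        intro i _
        have : 0 ≤ m * ((n:ℝ)+1) / ((i:ℝ)+1) := by positivity
        linarith
    obtain ⟨x, hx, hxm⟩ := hiv hmem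
    refine ⟨x, ?_, hxm⟩
    push_cast
    linarith [hx.1]
  have hs : ((n+1 : ℕ) : ℝ) - 1 ≤ xval (n+1) m ∧ genChoose (xval (n+1) m) (n+1) = m := by
    unfold xval
    rw [dif_pos hex]
    exact hex.choose_spec
  obtain ⟨h1, h2⟩ := hs
  refine ⟨?_, h2⟩
  push_cast at h1
  rcases (show 0 ≤ xval (n+1) m - n by linarith).lt_or_eq with h | h
  · exact h
  · rw [aux_gen, ← h] at h2
    simp at h2
    linarith

theorem gval_mono_in_l (l : ℕ) (hl : 2 ≤ l) (m : ℝ) (hm1 : 1 ≤ m)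
    (hm2 : m ≤ (Nat.choose (2 * l - 1) l : ℝ)) :
    gval l m ≤ gval (l + 1) m := by
  obtain ⟨n, rfl⟩ : ∃ n, l = n + 1 := ⟨l - 1, by omega⟩
  have hm : 0 < m := by linarith
  obtain ⟨ha, hx⟩ := aux_xval n m hm
  obtain ⟨hb, hy⟩ := aux_xval (n+1) m hm
  unfold gval
  rw [hx, hy]
  simp only [Nat.add_sub_cancel]
  generalize xval (n+1) m = x at *
  generalize xval (n+1+1) m = y at *
  have sx := aux_step n x
  have sy := aux_step (n+1) y
  rw [hx] at sx
  rw [hy] at sy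
  rw [aux_gen] at hx hy
  generalize x - (n:ℝ) = a at *
  generalize y - ((n+1:ℕ):ℝ) = b at *
  have e1 : genChoose x n = m * ((n:ℝ)+1) / a := by
    rw [eq_div_iff ha.ne']; exact sx.symm
  have e2 : genChoose y (n+1) = m * (((n+1:ℕ):ℝ)+1) / b := by
    rw [eq_div_iff hb.ne']; exact sy.symm
  have key : b / (((n+1:ℕ):ℝ)+1) ≤ a / ((n:ℝ)+1) := by
    by_contra hlt
    push Not at hlt
    have hab : a ≤ b := by
      rw [div_lt_div_iff₀ (by positivity) (by positivity)] at hlt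
      push_cast at hlt
      by_contra hc
      push Not at hc
      nlinarith [mul_lt_mul_of_pos_right hc (show (0:ℝ) < n + 1 by positivity)]
    have hp : ∏ i ∈ Finset.range n, (1 + a / ((i:ℝ)+1))
        ≤ ∏ i ∈ Finset.range (n+1), (1 + b / ((i:ℝ)+1)) := by
      rw [Finset.prod_range_succ]
      have h1 : ∏ i ∈ Finset.range n, (1 + a / ((i:ℝ)+1))
        ≤ ∏ i ∈ Finset.range n, (1 + b / ((i:ℝ)+1)) := by
        apply Finset.prod_le_prod
        · intro i _; positivity
        · intro i _; gcongr
      refine h1.trans (le_mul_of_one_le_right ?_ ?_)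
      · apply Finset.prod_nonneg; intro i _; positivity
      · have : 0 ≤ b / ((n:ℝ)+1) := by positivity
        linarith
    have hpos : 0 < ∏ i ∈ Finset.range n, (1 + a / ((i:ℝ)+1)) := by
      apply Finset.prod_pos; intro i _; positivity
    have := mul_lt_mul hlt hp hpos (by positivity)
    rw [hx, hy] at this
    exact lt_irrefl _ this
  rw [e1, e2]
  apply sub_le_sub_right
  rw [div_le_div_iff₀ (by positivity) (by positivity)] at key ⊢
  nlinarith [mul_le_mul_of_nonneg_left key hm.le]
end

section
/- Let n ≥ 2 and let F ⊆ 2^[n] \ {∅, [n]} be a butterfly-free family, and set M = {M ∈ F : there exist F, F′ ∈ F with F ⊊ M ⊊ F′}. Then Σ_{F ∈ F \ M} 1/C(n,|F|) + Σ_{M ∈ M} (1 + ((|M|−1)(n−|M|−1) − 1)/(|M|(n−|M|))) · 1/C(n,|M|) ≤ 2. -/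
open Finset in
lemma aux_swap {n : ℕ} (M S U : Finset (Fin n)) (hU : ∀ x ∈ U, ∀ y ∈ U, (x ∈ M ↔ y ∈ M))
    (x₀ y₀ : Fin n) (hx : x₀ ∈ U) (hy : y₀ ∈ U) (hxS : x₀ ∈ S) (hyS : y₀ ∉ S) :
    #U * #(Numbering.prefixed M ∩ Numbering.prefixed S) ≤ #(Numbering.prefixed M) := by
  classical
  let e : Fin n → Equiv.Perm (Fin n) := fun u =>
    if u = x₀ then 1 else if u ∈ S then Equiv.swap u y₀ else Equiv.swap u x₀
  have hinv : ∀ u x, e u (e u x) = x := by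
    intro u x
    simp only [e]
    split_ifs <;> simp
  have hUe : ∀ u ∈ U, ∀ x, (e u x ∈ M ↔ x ∈ M) := by
    intro u hu x
    simp only [e]
    split_ifs
    · simp
    · rw [Equiv.swap_apply_def]; split_ifs
      · subst x; exact hU _ hy _ hu
      · subst x; exact hU _ hu _ hy
      · rfl
    · rw [Equiv.swap_apply_def]; split_ifs
      · subst x; exact hU _ hx _ hu
      · subst x; exact hU _ hu _ hx
      · rfl
  have hdist : ∀ u v, (∀ x, e u x ∈ S ↔ e v x ∈ S) → u = v := by
    intro u v h
    have h1 := h u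
    have h2 := h v
    have h3 := h x₀
    have h4 := h y₀
    simp only [e] at h1 h2 h3 h4
    by_contra hne
    split_ifs at h1 h2 h3 h4 <;> simp [Equiv.swap_apply_def] at h1 h2 h3 h4 <;> grind
  rw [← card_product]
  refine card_le_card_of_injOn (fun p => (e p.1).trans p.2) ?_ ?_
  · rintro ⟨u, f⟩ h
    simp only [coe_product, Set.mem_prod, mem_coe, mem_inter, Numbering.mem_prefixed] at h ⊢
    obtain ⟨hu, hfM, hfS⟩ := h
    intro x
    rw [← hUe u hu x]
    exact hfM _
  · rintro ⟨u, f⟩ h ⟨v, g⟩ h' heq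
    simp only [coe_product, Set.mem_prod, mem_coe, mem_inter, Numbering.mem_prefixed] at h h' heq
    obtain ⟨hu, hfM, hfS⟩ := h
    obtain ⟨hv, hgM, hgS⟩ := h'
    have key : ∀ x, f (e u x) = g (e v x) := fun x => by
      have := congrArg (fun k => k x) heq
      simpa using this
    have huv : u = v := by
      apply hdist
      intro x
      rw [hfS, hgS, key]
    subst huv
    congr 1
    ext x
    have := key (e u x)
    rw [hinv] at this
    rw [this]

open Finset in
lemma aux_chain {n : ℕ} (F M G : Finset (Finset (Fin n)))
    (hb : ∀ A ∈ F, ∀ B ∈ F, ∀ C ∈ F, ∀ D ∈ F, A ≠ B → C ≠ D → A ⊂ C → A ⊂ D → B ⊂ C →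
      B ⊂ D → False)
    (hM : M = F.filter (fun X => ∃ A ∈ F, ∃ B ∈ F, A ⊂ X ∧ X ⊂ B))
    (a b : Finset (Fin n) → Finset (Fin n))
    (hab : ∀ X ∈ M, a X ∈ F ∧ b X ∈ F ∧ a X ⊂ X ∧ X ⊂ b X)
    (hG : G ⊆ F) (hch : ∀ X ∈ G, ∀ Y ∈ G, X ≠ Y → X ⊂ Y ∨ Y ⊂ X) :
    (#G : ℝ) + ∑ X ∈ M, ((if X ∈ G then (1:ℝ) else 0) - (if X ∈ G ∧ a X ∈ G then 1 else 0)
      - (if X ∈ G ∧ b X ∈ G then 1 else 0)) ≤ 2 := by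
  have hMF : ∀ X ∈ M, X ∈ F := fun X h => by rw [hM] at h; exact (mem_filter.1 h).1
  by_cases h : ∃ X ∈ M, X ∈ G
  · obtain ⟨X, hXM, hXG⟩ := h
    obtain ⟨h1, h2, h3, h4⟩ := hab X hXM
    have hXF := hMF X hXM
    have hlow : ∀ Y ∈ F, Y ⊂ X → Y = a X := fun Y hY hYX => by
      by_contra hne
      exact hb Y hY _ h1 X hXF _ h2 hne h4.ne hYX (hYX.trans h4) h3 (h3.trans h4)
    have hup : ∀ Y ∈ F, X ⊂ Y → Y = b X := fun Y hY hYX => by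
      by_contra hne
      exact hb _ h1 X hXF Y hY _ h2 h3.ne hne (h3.trans hYX) (h3.trans h4) hYX h4
    have huniq : ∀ Y ∈ M, Y ∈ G → Y = X := by
      intro Y hYM hYG
      by_contra hne
      obtain ⟨k1, k2, k3, k4⟩ := hab Y hYM
      rcases hch Y hYG X hXG hne with h | h
      · have e1 := hlow _ k1 (k3.trans h)
        have e2 := hlow _ (hG hYG) h
        exact k3.ne (e1.trans e2.symm)
      · have e1 := hup _ k2 (h.trans k4)
        have e2 := hup _ (hG hYG) h
        exact k4.ne (e2.trans e1.symm)
    rw [Finset.sum_eq_single_of_mem X hXM]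
    · have hsub : G ⊆ {X} ∪ ((if a X ∈ G then {a X} else ∅) ∪ (if b X ∈ G then {b X} else ∅)) := by
        intro Y hY
        by_cases hne : Y = X
        · simp [hne]
        rcases hch Y hY X hXG hne with h | h
        · have := hlow _ (hG hY) h
          subst this; simp [hY]
        · have := hup _ (hG hY) h
          subst this; simp [hY]
      have hc := (card_le_card hsub).trans ((card_union_le _ _).trans
        (Nat.add_le_add_left (card_union_le _ _) _))
      have hc' : (#G : ℝ) ≤ 1 + ((if a X ∈ G then 1 else 0) + (if b X ∈ G then 1 else 0)) := by
        have : #G ≤ 1 + ((if a X ∈ G then 1 else 0) + (if b X ∈ G then 1 else 0)) := by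
          refine hc.trans (le_of_eq ?_)
          split_ifs <;> simp
        exact_mod_cast this
      simp only [hXG, true_and, if_true]
      linarith
    · intro Y hY hne
      have : Y ∉ G := fun h => hne (huniq Y hY h)
      simp [this]
  · push Not at h
    rw [Finset.sum_eq_zero]
    · have : #G ≤ 2 := by
        by_contra hc
        push Not at hc
        obtain ⟨X, Y, Z, hX, hY, hZ, hXY, hXZ, hYZ⟩ := two_lt_card_iff.1 hc
        have key : ∀ X ∈ G, ∀ Y ∈ G, ∀ Z ∈ G, X ⊂ Y → Y ⊂ Z → False := by
          intro X hX Y hY Z hZ h1 h2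
          refine h Y ?_ hY
          rw [hM, mem_filter]
          exact ⟨hG hY, X, hG hX, Z, hG hZ, h1, h2⟩
        rcases hch X hX Y hY hXY with h1 | h1 <;> rcases hch X hX Z hZ hXZ with h2 | h2 <;>
          rcases hch Y hY Z hZ hYZ with h3 | h3
        all_goals first
          | exact key _ hX _ hY _ hZ ‹_› ‹_›
          | exact key _ hX _ hZ _ hY ‹_› ‹_›
          | exact key _ hY _ hX _ hZ ‹_› ‹_›
          | exact key _ hY _ hZ _ hX ‹_› ‹_›
          | exact key _ hZ _ hX _ hY ‹_› ‹_›
          | exact key _ hZ _ hY _ hX ‹_› ‹_›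
      have : (#G : ℝ) ≤ 2 := by exact_mod_cast this
      linarith
    · intro X hX
      simp [h X hX]


def IsButterfly {n : ℕ} (S : Finset (Finset (Fin n))) : Prop :=
  ∃ A B C D : Finset (Fin n), S = {A, B, C, D} ∧ A ≠ B ∧ C ≠ D ∧
    A ⊂ C ∧ A ⊂ D ∧ B ⊂ C ∧ B ⊂ D

def ButterflyFree {n : ℕ} (F : Finset (Finset (Fin n))) : Prop :=
  ∀ S ⊆ F, ¬ IsButterfly S

/-- Improved LYM-type inequality for butterfly-free families avoiding `∅` and `[n]`:
with `M` the set of middle elements of 3-chains in `F`,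
`∑_{F ∈ F∖M} 1/C(n,|F|) + ∑_{M ∈ M} (1 + ((|M|−1)(n−|M|−1)−1)/(|M|(n−|M|)))·1/C(n,|M|) ≤ 2`. -/
theorem improved_lym (n : ℕ) (hn : 2 ≤ n) (F : Finset (Finset (Fin n)))
    (hempty : ∅ ∉ F) (huniv : Finset.univ ∉ F) (hbf : ButterflyFree F)
    (M : Finset (Finset (Fin n)))
    (hM : M = F.filter (fun X => ∃ A ∈ F, ∃ B ∈ F, A ⊂ X ∧ X ⊂ B)) :
    ∑ A ∈ F \ M, (1 : ℝ) / (n.choose A.card : ℝ) +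
      ∑ X ∈ M, (1 + (((X.card : ℝ) - 1) * ((n : ℝ) - (X.card : ℝ) - 1) - 1) /
          ((X.card : ℝ) * ((n : ℝ) - (X.card : ℝ)))) * (1 / (n.choose X.card : ℝ)) ≤ 2 := by
  classical
  have hb : ∀ A ∈ F, ∀ B ∈ F, ∀ C ∈ F, ∀ D ∈ F, A ≠ B → C ≠ D → A ⊂ C → A ⊂ D → B ⊂ C →
      B ⊂ D → False := by
    intro A hA B hB C hC D hD h1 h2 h3 h4 h5 h6
    refine hbf {A, B, C, D} ?_ ⟨A, B, C, D, rfl, h1, h2, h3, h4, h5, h6⟩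
    intro X hX
    simp only [Finset.mem_insert, Finset.mem_singleton] at hX
    rcases hX with rfl | rfl | rfl | rfl <;> assumption
  have hex : ∀ X, ∃ A B, X ∈ M → A ∈ F ∧ B ∈ F ∧ A ⊂ X ∧ X ⊂ B := by
    intro X
    by_cases hX : X ∈ M
    · have hX' := hX
      rw [hM, Finset.mem_filter] at hX'
      obtain ⟨_, A, hA, B, hB, h1, h2⟩ := hX'
      exact ⟨A, B, fun _ => ⟨hA, hB, h1, h2⟩⟩
    · exact ⟨∅, ∅, fun h => absurd h hX⟩
  choose a b hab using hex
  have hMF : M ⊆ F := by rw [hM]; exact Finset.filter_subset _ _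
  let P : Finset (Fin n) → Finset (Numbering (Fin n)) := fun X => Numbering.prefixed X
  have hpt : ∀ f : Numbering (Fin n),
      ∑ X ∈ F, (if f ∈ P X then (1:ℝ) else 0) + ∑ X ∈ M, ((if f ∈ P X then (1:ℝ) else 0)
        - (if f ∈ P X ∩ P (a X) then 1 else 0) - (if f ∈ P X ∩ P (b X) then 1 else 0)) ≤ 2 := by
    intro f
    have := aux_chain F M (F.filter (fun X => f ∈ P X)) hb hM a b hab (Finset.filter_subset _ _) ?_
    · refine le_trans (le_of_eq ?_) this
      congr 1
      · simp
      · refine Finset.sum_congr rfl fun X hX => ?_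
        simp [hMF hX, (hab X hX).1, (hab X hX).2.1]
    · intro X hX Y hY hne
      simp only [Finset.mem_filter, P, Numbering.mem_prefixed] at hX hY
      rcases le_total X.card Y.card with h | h
      · exact Or.inl ((hX.2.subset_of_card_le_card hY.2 h).ssubset_of_ne hne)
      · exact Or.inr ((hY.2.subset_of_card_le_card hX.2 h).ssubset_of_ne hne.symm)
  have hsum := Finset.sum_le_sum (fun f (_ : f ∈ (Finset.univ : Finset (Numbering (Fin n)))) => hpt f)
  have hcnt : ∀ S : Finset (Numbering (Fin n)),
      ∑ f : Numbering (Fin n), (if f ∈ S then (1:ℝ) else 0) = S.card := by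
    intro S; simp
  rw [Finset.sum_add_distrib, Finset.sum_comm, Finset.sum_comm (t := M)] at hsum
  simp only [Finset.sum_sub_distrib, hcnt, Finset.sum_const, Finset.card_univ,
    Fintype.card_numbering, Fintype.card_fin, nsmul_eq_mul] at hsum
  rw [← Finset.sum_sub_distrib, ← Finset.sum_sub_distrib] at hsum
  have hn0 : (0:ℝ) < (n.factorial : ℝ) := by exact_mod_cast n.factorial_pos
  have hP : ∀ X : Finset (Fin n), ((P X).card : ℝ) = n.factorial * (1 / (n.choose X.card : ℝ)) := by
    intro X
    have hle : X.card ≤ n := by simpa using X.card_le_univ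
    have h1 : (P X).card = X.card.factorial * (n - X.card).factorial := by
      simpa using Numbering.card_prefixed X
    have h2 := Nat.choose_mul_factorial_mul_factorial hle
    have h3 : (0:ℝ) < (n.choose X.card : ℝ) := by exact_mod_cast Nat.choose_pos hle
    rw [h1, ← h2]
    push_cast
    field_simp
  have hmain : ∀ X ∈ M, (n.factorial : ℝ) * ((((X.card : ℝ) - 1) * ((n : ℝ) - (X.card : ℝ) - 1) - 1) /
          ((X.card : ℝ) * ((n : ℝ) - (X.card : ℝ))) * (1 / (n.choose X.card : ℝ))) ≤
      ((P X).card : ℝ) - ((P X ∩ P (a X)).card : ℝ) - ((P X ∩ P (b X)).card : ℝ) := by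
    intro X hX
    obtain ⟨h1, h2, h3, h4⟩ := hab X hX
    obtain ⟨y, hyX, hya⟩ := Finset.exists_of_ssubset h3
    obtain ⟨x, hxb, hxX⟩ := Finset.exists_of_ssubset h4
    have hane : (a X).Nonempty := by
      rw [Finset.nonempty_iff_ne_empty]; rintro h; exact hempty (h ▸ h1)
    obtain ⟨x', hx'⟩ := hane
    have hbne : ∃ y', y' ∉ b X := by
      by_contra hc
      push Not at hc
      exact huniv ((Finset.eq_univ_iff_forall.2 hc) ▸ h2)
    obtain ⟨y', hy'⟩ := hbne
    have i1 := aux_swap X (a X) X (by intro x hx y hy; simp [hx, hy]) x' y (h3.1 hx') hyX hx' hya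
    have i2 := aux_swap X (b X) Xᶜ
      (by intro x hx y hy; rw [Finset.mem_compl] at hx hy; simp [hx, hy]) x y'
      (by simpa using hxX) (by rw [Finset.mem_compl]; exact fun h => hy' (h4.1 h)) hxb hy'
    have hle : X.card < n := by
      simpa using Finset.card_lt_univ_of_notMem hxX
    have hpos : 0 < X.card := Finset.card_pos.2 ⟨y, hyX⟩
    have hcc : Xᶜ.card = n - X.card := by rw [Finset.card_compl, Fintype.card_fin]
    rw [hcc] at i2
    have j1 : (X.card : ℝ) * ((P X ∩ P (a X)).card : ℝ) ≤ (P X).card := by exact_mod_cast i1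
    have j2 : ((n : ℝ) - (X.card : ℝ)) * ((P X ∩ P (b X)).card : ℝ) ≤ (P X).card := by
      rw [← Nat.cast_sub hle.le]; exact_mod_cast i2
    have p1 : (0:ℝ) < X.card := by exact_mod_cast hpos
    have p2 : (0:ℝ) < (n:ℝ) - X.card := by
      have : (X.card : ℝ) < n := by exact_mod_cast hle
      linarith
    have k1 : ((P X ∩ P (a X)).card : ℝ) ≤ (P X).card / (X.card : ℝ) := by
      rw [le_div_iff₀ p1]; linarith
    have k2 : ((P X ∩ P (b X)).card : ℝ) ≤ (P X).card / ((n:ℝ) - X.card) := by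
      rw [le_div_iff₀ p2]; linarith
    have e : (n.factorial : ℝ) * ((((X.card : ℝ) - 1) * ((n : ℝ) - (X.card : ℝ) - 1) - 1) /
          ((X.card : ℝ) * ((n : ℝ) - (X.card : ℝ))) * (1 / (n.choose X.card : ℝ))) =
        (P X).card - (P X).card / (X.card : ℝ) - (P X).card / ((n:ℝ) - X.card) := by
      rw [hP X]
      generalize (1 / (n.choose X.card : ℝ)) = c
      field_simp
      ring
    rw [e]
    linarith
  have hs2 := Finset.sum_le_sum hmain
  rw [← Finset.mul_sum] at hs2
  simp only [hP, ← Finset.mul_sum] at hsum hs2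
  have hfin : (n.factorial : ℝ) * (∑ A ∈ F, (1 : ℝ) / (n.choose A.card : ℝ) +
      ∑ X ∈ M, ((((X.card : ℝ) - 1) * ((n : ℝ) - (X.card : ℝ) - 1) - 1) /
          ((X.card : ℝ) * ((n : ℝ) - (X.card : ℝ)))) * (1 / (n.choose X.card : ℝ)))
      ≤ n.factorial * 2 := by
    rw [mul_add]; linarith
  have hfin2 := le_of_mul_le_mul_left hfin hn0
  rw [← Finset.sum_sdiff hMF, add_assoc, ← Finset.sum_add_distrib] at hfin2
  refine le_trans (le_of_eq ?_) hfin2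
  congr 1
  refine Finset.sum_congr rfl fun X _ => ?_
  ring
end

section
/- Let n ≥ 8 and let F ⊆ 2^[n] be a butterfly-free family with ∅ ∉ F and [n] ∉ F, and set M = {M ∈ F : there exist F, F′ ∈ F with F ⊊ M ⊊ F′}. Then |F| ≤ Σ(n,2) − |M|/3. -/
open Finset Nat Numbering in
lemma bf_card_two {n : ℕ} (S T : Finset (Fin n)) (hST : S ⊆ T) :
    #(prefixed S ∩ prefixed T) ≤ (#S)! * (#T - #S)! * (n - #T)! := by
  classical
  let S' : Finset T := S.subtype (· ∈ T)
  have hS' : #S' = #S := by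
    have : S'.map (Function.Embedding.subtype _) = S := by
      simp only [S', Finset.subtype_map]
      exact Finset.filter_true_of_mem (fun x hx => hST hx)
    rw [← this, Finset.card_map]
  have key : #(prefixed S ∩ prefixed T) ≤
      #((prefixed S') ×ˢ (univ : Finset (Numbering ↑(Tᶜ)))) := by
    rw [← Finset.card_attach]
    apply Finset.card_le_card_of_injOn
      (fun f => prefixedEquiv T ⟨f.1, (Finset.mem_inter.1 f.2).2⟩)
    · intro f _
      have h1 := mem_prefixed.1 (Finset.mem_inter.1 f.2).1
      simp only [Finset.coe_product, Set.mem_prod, Finset.mem_coe, and_true,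
        mem_prefixed, Finset.coe_univ, Set.mem_univ]
      intro x
      rw [hS']
      simp only [S', Finset.mem_subtype]
      exact h1 x
    · intro f _ g _ h
      have := (prefixedEquiv T).injective h
      ext1
      simpa using this
  refine key.trans (le_of_eq ?_)
  rw [Finset.card_product, card_prefixed, hS', Finset.card_univ, Fintype.card_numbering]
  simp

lemma bf_le_choose : ∀ m a : ℕ, 1 ≤ a → a < m → m ≤ m.choose a := by
  intro m
  induction m with
  | zero => intro a _ h; omega
  | succ m ih =>
    intro a h1 h2
    obtain ⟨a, rfl⟩ : ∃ k, a = k + 1 := ⟨a - 1, by omega⟩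
    rw [Nat.choose_succ_succ]
    rcases Nat.lt_or_ge (a+1) m with h | h
    · have := ih (a+1) (by omega) h
      have := Nat.choose_pos (n := m) (k := a) (by omega)
      simp only [Nat.succ_eq_add_one] at *
      omega
    · have : m = a + 1 := by omega
      subst this
      simp

lemma bf_choose_anti (n k : ℕ) (hk : n / 2 + 1 ≤ k) : n.choose k ≤ n.choose (n / 2 + 1) := by
  induction k, hk using Nat.le_induction with
  | base => exact le_rfl
  | succ k hk ih =>
    refine le_trans ?_ ih
    have h := Nat.choose_succ_right_eq n k
    have h2 : n - k ≤ k + 1 := by omega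
    have : n.choose (k+1) * (k+1) ≤ n.choose k * (k+1) := by
      rw [h]; exact Nat.mul_le_mul_left _ h2
    exact Nat.le_of_mul_le_mul_right this (by omega)

lemma bf_choose_le (n k : ℕ) (hk : k ≠ n / 2) : n.choose k ≤ n.choose (n / 2 + 1) := by
  rcases Nat.lt_or_ge k (n/2) with h | h
  · rw [← Nat.choose_symm (show k ≤ n by omega)]
    exact bf_choose_anti n _ (by omega)
  · exact bf_choose_anti n k (by omega)

open Nat in
lemma bf_frac1 (n s t : ℕ) (h1 : 1 ≤ s) (h2 : s < t) :
    ((s ! * (t - s)! * (n - t)! : ℕ) : ℝ) ≤ ((t ! * (n - t)! : ℕ) : ℝ) * (1 / t) := by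
  have h := Nat.choose_mul_factorial_mul_factorial h2.le
  have hc := bf_le_choose t s h1 h2
  rw [mul_one_div, le_div_iff₀ (by exact_mod_cast (by omega : 0 < t))]
  have : s ! * (t - s)! * (n - t)! * t ≤ t ! * (n - t)! := by
    rw [← h]
    calc s ! * (t - s)! * (n - t)! * t = t * (s ! * (t - s)! * (n - t)!) := by ring
      _ ≤ t.choose s * (s ! * (t - s)! * (n - t)!) := Nat.mul_le_mul_right _ hc
      _ = _ := by ring
  exact_mod_cast this

open Nat in
lemma bf_frac2 (n s t : ℕ) (h1 : s < t) (h2 : t < n) :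
    ((s ! * (t - s)! * (n - t)! : ℕ) : ℝ) ≤ ((s ! * (n - s)! : ℕ) : ℝ) * (1 / ((n - s : ℕ) : ℝ)) := by
  have h := Nat.choose_mul_factorial_mul_factorial (n := n - s) (k := t - s) (by omega)
  have hc := bf_le_choose (n - s) (t - s) (by omega) (by omega)
  rw [show n - s - (t - s) = n - t by omega] at h
  rw [mul_one_div, le_div_iff₀ (by exact_mod_cast (by omega : 0 < n - s))]
  have : s ! * (t - s)! * (n - t)! * (n - s) ≤ s ! * (n - s)! := by
    rw [← h]
    calc s ! * (t - s)! * (n - t)! * (n - s) = (n - s) * (s ! * (t - s)! * (n - t)!) := by ring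
      _ ≤ (n - s).choose (t - s) * (s ! * (t - s)! * (n - t)!) := Nat.mul_le_mul_right _ hc
      _ = _ := by ring
  exact_mod_cast this

lemma bf_no {n : ℕ} {F : Finset (Finset (Fin n))} (hbf : ButterflyFree F)
    {A B C D : Finset (Fin n)} (hA : A ∈ F) (hB : B ∈ F) (hC : C ∈ F) (hD : D ∈ F)
    (hAB : A ≠ B) (hCD : C ≠ D) (h1 : A ⊂ C) (h2 : A ⊂ D) (h3 : B ⊂ C) (h4 : B ⊂ D) : False := by
  refine hbf {A, B, C, D} ?_ ⟨A, B, C, D, rfl, hAB, hCD, h1, h2, h3, h4⟩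
  intro x hx
  simp only [Finset.mem_insert, Finset.mem_singleton] at hx
  rcases hx with rfl | rfl | rfl | rfl <;> assumption

open Finset Numbering in
lemma bf_point {n : ℕ} (F : Finset (Finset (Fin n))) (hbf : ButterflyFree F)
    (M : Finset (Finset (Fin n)))
    (hM : M = F.filter (fun X => ∃ A ∈ F, ∃ B ∈ F, A ⊂ X ∧ X ⊂ B))
    (a b : Finset (Fin n) → Finset (Fin n))
    (hab : ∀ X ∈ M, a X ∈ F ∧ b X ∈ F ∧ a X ⊂ X ∧ X ⊂ b X)
    (f : Numbering (Fin n)) :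
    (∑ X ∈ F, if IsPrefix f X then (1:ℝ) else 0) +
      ∑ X ∈ M, ((if IsPrefix f X then (1:ℝ) else 0)
        - (if IsPrefix f (a X) ∧ IsPrefix f X then (1:ℝ) else 0)
        - (if IsPrefix f X ∧ IsPrefix f (b X) then (1:ℝ) else 0)) ≤ 2 := by
  classical
  have hMF : ∀ X ∈ M, X ∈ F := fun X hX => by rw [hM] at hX; exact (mem_filter.1 hX).1
  have hun1 : ∀ X ∈ M, ∀ Y ∈ F, Y ⊂ X → Y = a X := by
    intro X hX Y hY h
    obtain ⟨h1, h2, h3, h4⟩ := hab X hX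
    by_contra hne
    exact bf_no hbf hY h1 (hMF X hX) h2 hne h4.ne h (h.trans h4) h3 (h3.trans h4)
  have hun2 : ∀ X ∈ M, ∀ Y ∈ F, X ⊂ Y → Y = b X := by
    intro X hX Y hY h
    obtain ⟨h1, h2, h3, h4⟩ := hab X hX
    by_contra hne
    exact bf_no hbf h1 (hMF X hX) hY h2 h3.ne hne (h3.trans h) (h3.trans h4) h h4
  have hMM : ∀ X ∈ M, ∀ Y ∈ M, ¬ X ⊂ Y := by
    intro X hX Y hY h
    obtain ⟨h1, h2, h3, h4⟩ := hab X hX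
    obtain ⟨k1, k2, k3, k4⟩ := hab Y hY
    exact bf_no hbf h1 (hMF X hX) (hMF Y hY) k2 h3.ne k4.ne (h3.trans h) ((h3.trans h).trans k4)
      h (h.trans k4)
  have hcomp : ∀ X Y : Finset (Fin n), IsPrefix f X → IsPrefix f Y → X ≠ Y → X ⊂ Y ∨ Y ⊂ X := by
    intro X Y hX hY hne
    rcases le_total #X #Y with h | h
    · exact Or.inl ((hX.subset_of_card_le_card hY h).ssubset_of_ne hne)
    · exact Or.inr ((hY.subset_of_card_le_card hX h).ssubset_of_ne hne.symm)
  by_cases hex : ∃ X ∈ M, IsPrefix f X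
  · obtain ⟨X, hX, hpX⟩ := hex
    obtain ⟨h1, h2, h3, h4⟩ := hab X hX
    rw [Finset.sum_eq_single_of_mem (s := M) X hX]
    · have hsub : F.filter (fun Y => IsPrefix f Y) ⊆
          ({X, a X, b X} : Finset (Finset (Fin n))) := by
        intro Y hY
        obtain ⟨hYF, hpY⟩ := mem_filter.1 hY
        simp only [mem_insert, mem_singleton]
        by_cases hne : Y = X
        · exact Or.inl hne
        · rcases hcomp Y X hpY hpX hne with h | h
          · exact Or.inr (Or.inl (hun1 X hX Y hYF h))
          · exact Or.inr (Or.inr (hun2 X hX Y hYF h))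
      have : (∑ Y ∈ F, if IsPrefix f Y then (1:ℝ) else 0) =
          ∑ Y ∈ ({X, a X, b X} : Finset (Finset (Fin n))), if IsPrefix f Y then (1:ℝ) else 0 := by
        symm
        apply Finset.sum_subset
        · intro Y hY
          simp only [mem_insert, mem_singleton] at hY
          rcases hY with rfl | rfl | rfl
          · exact hMF _ hX
          · exact h1
          · exact h2
        · intro Y hY hn
          rw [if_neg]
          intro hp
          exact hn (hsub (mem_filter.2 ⟨hY, hp⟩))
      rw [this, Finset.sum_insert, Finset.sum_insert, Finset.sum_singleton]
      · simp only [hpX, and_true, true_and, if_true]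
        linarith
      · simpa using (h3.trans h4).ne
      · simp only [mem_insert, mem_singleton, not_or]
        exact ⟨h3.ne', h4.ne⟩
    · intro Y hY hne
      have hp : ¬ IsPrefix f Y := by
        intro hp
        rcases hcomp Y X hp hpX hne with h | h
        · exact hMM Y hY X hX h
        · exact hMM X hX Y hY h
      simp [hp]
  · push Not at hex
    have h0 : ∑ X ∈ M, ((if IsPrefix f X then (1:ℝ) else 0)
        - (if IsPrefix f (a X) ∧ IsPrefix f X then (1:ℝ) else 0)
        - (if IsPrefix f X ∧ IsPrefix f (b X) then (1:ℝ) else 0)) = 0 := by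
      apply Finset.sum_eq_zero
      intro X hX
      simp [hex X hX]
    rw [h0, add_zero, Finset.sum_boole]
    have : #(F.filter (fun Y => IsPrefix f Y)) ≤ 2 := by
      by_contra hlt
      push Not at hlt
      obtain ⟨x, hx, y, hy, z, hz, hxy, hxz, hyz⟩ := Finset.two_lt_card.1 hlt
      obtain ⟨hx, px⟩ := mem_filter.1 hx
      obtain ⟨hy, py⟩ := mem_filter.1 hy
      obtain ⟨hz, pz⟩ := mem_filter.1 hz
      have mid : ∀ A ∈ F, ∀ X ∈ F, ∀ B ∈ F, IsPrefix f X → A ⊂ X → X ⊂ B → False := by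
        intro A hA X hX B hB hp h1 h2
        exact hex X (by rw [hM]; exact mem_filter.2 ⟨hX, A, hA, B, hB, h1, h2⟩) hp
      rcases hcomp x y px py hxy with h1 | h1 <;> rcases hcomp x z px pz hxz with h2 | h2 <;>
        rcases hcomp y z py pz hyz with h3 | h3 <;>
        first
        | exact mid x hx y hy z hz py h1 h3
        | exact mid x hx z hz y hy pz h2 h3
        | exact mid y hy x hx z hz px h1 h2
        | exact mid y hy z hz x hx pz h3 h2
        | exact mid z hz x hx y hy px h2 h1
        | exact mid z hz y hy x hx py h3 h1
    exact_mod_cast this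

open Finset Nat Numbering in
lemma bf_sum {n : ℕ} (F : Finset (Finset (Fin n))) (hbf : ButterflyFree F)
    (hempty : ∅ ∉ F) (huniv : Finset.univ ∉ F)
    (M : Finset (Finset (Fin n)))
    (hM : M = F.filter (fun X => ∃ A ∈ F, ∃ B ∈ F, A ⊂ X ∧ X ⊂ B)) :
    (∑ X ∈ F, (1:ℝ) / n.choose #X) +
      ∑ X ∈ M, (1 - 1 / (#X : ℝ) - 1 / ((n - #X : ℕ) : ℝ)) * (1 / n.choose #X) ≤ 2 := by
  classical
  have hM' : ∀ X ∈ M, ∃ A B, A ∈ F ∧ B ∈ F ∧ A ⊂ X ∧ X ⊂ B := by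
    intro X hX
    rw [hM] at hX
    obtain ⟨_, A, hA, B, hB, h1, h2⟩ := mem_filter.1 hX
    exact ⟨A, B, hA, hB, h1, h2⟩
  choose! a b hab using hM'
  have hs := Finset.sum_le_sum (s := (univ : Finset (Numbering (Fin n))))
    (fun f _ => bf_point F hbf M hM a b hab f)
  rw [Finset.sum_add_distrib, Finset.sum_comm, Finset.sum_comm (t := M)] at hs
  have hP : ∀ X : Finset (Fin n),
      (∑ f : Numbering (Fin n), if IsPrefix f X then (1:ℝ) else 0) = ((#X)! * (n - #X)! : ℕ) := by
    intro X
    rw [Finset.sum_boole]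
    have := card_prefixed X
    rw [Fintype.card_fin] at this
    rw [← this]; rfl
  have hPP : ∀ X Y : Finset (Fin n), X ⊆ Y →
      (∑ f : Numbering (Fin n), if IsPrefix f X ∧ IsPrefix f Y then (1:ℝ) else 0) ≤
        ((#X)! * (#Y - #X)! * (n - #Y)! : ℕ) := by
    intro X Y h
    rw [Finset.sum_boole]
    have := bf_card_two X Y h
    have e : prefixed X ∩ prefixed Y = univ.filter (fun f => IsPrefix f X ∧ IsPrefix f Y) := by
      ext f; simp
    rw [e] at this
    exact_mod_cast this
  have hF : ∀ X : Finset (Fin n), (((#X)! * (n - #X)! : ℕ) : ℝ) = n ! * (1 / n.choose #X) := by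
    intro X
    have hle : #X ≤ n := by simpa using X.card_le_univ
    have := Nat.choose_mul_factorial_mul_factorial hle
    have hp : (0:ℝ) < n.choose #X := by exact_mod_cast Nat.choose_pos hle
    rw [← this]
    push_cast
    field_simp
  have hcard : ∑ f : Numbering (Fin n), (2:ℝ) = n ! * 2 := by
    rw [Finset.sum_const, Finset.card_univ, Fintype.card_numbering]; simp
  rw [hcard] at hs
  have hn0 : (0:ℝ) < n ! := by exact_mod_cast Nat.factorial_pos n
  refine le_of_mul_le_mul_left (le_trans ?_ hs) hn0
  rw [mul_add, Finset.mul_sum, Finset.mul_sum]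
  apply _root_.add_le_add
  · apply Finset.sum_le_sum
    intro X _
    rw [hP, hF]
  · apply Finset.sum_le_sum
    intro X hX
    obtain ⟨h1, h2, h3, h4⟩ := hab X hX
    rw [Finset.sum_sub_distrib, Finset.sum_sub_distrib, hP]
    have ha0 : 1 ≤ #(a X) := Finset.card_pos.2
      (Finset.nonempty_iff_ne_empty.2 (fun h => hempty (h ▸ h1)))
    have hb0 : #(b X) < n := by
      have : #(b X) < Fintype.card (Fin n) :=
        (Finset.card_lt_iff_ne_univ _).2 (fun h => huniv (h ▸ h2))
      simpa using this
    have k1 := (hPP _ _ h3.subset).trans (bf_frac1 n _ _ ha0 (Finset.card_lt_card h3))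
    have k2 := (hPP _ _ h4.subset).trans (bf_frac2 n _ _ (Finset.card_lt_card h4) hb0)
    rw [hF] at k1 k2 ⊢
    linarith

/-- If `F ⊆ 2^[n]` is butterfly-free with `∅, [n] ∉ F` and `M` is the set of middle elements
of 3-chains in `F`, then `|F| ≤ Σ(n,2) − |M|/3`. -/
theorem butterfly_free_minus_middles (n : ℕ) (hn : 8 ≤ n) (F : Finset (Finset (Fin n)))
    (hempty : ∅ ∉ F) (huniv : Finset.univ ∉ F) (hbf : ButterflyFree F)
    (M : Finset (Finset (Fin n)))
    (hM : M = F.filter (fun X => ∃ A ∈ F, ∃ B ∈ F, A ⊂ X ∧ X ⊂ B)) :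
    (F.card : ℝ) ≤ (Sigma2 n : ℝ) - (M.card : ℝ) / 3 := by
  classical
  have hs := bf_sum F hbf hempty huniv M hM
  obtain ⟨c, hc⟩ : ∃ c : ℝ, c = (n.choose (n / 2 + 1) : ℝ) := ⟨_, rfl⟩
  obtain ⟨N, hN⟩ : ∃ N : ℝ, N = (n.choose (n / 2) : ℝ) := ⟨_, rfl⟩
  have hc0 : 0 < c := by rw [hc]; exact_mod_cast Nat.choose_pos (by omega)
  have hN0 : 0 < N := by rw [hN]; exact_mod_cast Nat.choose_pos (by omega)
  have hcN : c ≤ N := by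
    rw [hc, hN]; exact_mod_cast Nat.choose_le_middle _ _
  -- the sum over F
  have hF : (F.card : ℝ) ≤ c * (∑ X ∈ F, (1:ℝ) / n.choose X.card) + (N - c) := by
    have e1 : ∀ X ∈ F, (1:ℝ) ≤ c * (1 / n.choose X.card) +
        (if X.card = n / 2 then 1 - c / N else 0) := by
      intro X _
      have hle : X.card ≤ n := by simpa using X.card_le_univ
      have hp : (0:ℝ) < n.choose X.card := by exact_mod_cast Nat.choose_pos hle
      split_ifs with h
      · rw [h, ← hN, mul_one_div]; linarith
      · have : (n.choose X.card : ℝ) ≤ c := by rw [hc]; exact_mod_cast bf_choose_le n _ h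
        rw [mul_one_div, add_zero, le_div_iff₀ hp]; linarith
    have e2 := Finset.sum_le_sum e1
    rw [Finset.sum_add_distrib, ← Finset.mul_sum, ← Finset.sum_filter, Finset.sum_const,
      Finset.sum_const, nsmul_eq_mul, nsmul_eq_mul, mul_one] at e2
    have e3 : ((F.filter (fun X => X.card = n / 2)).card : ℝ) ≤ N := by
      rw [hN]
      have : F.filter (fun X => X.card = n / 2) ⊆
          Finset.powersetCard (n / 2) (Finset.univ : Finset (Fin n)) := by
        intro X hX
        rw [Finset.mem_powersetCard]
        exact ⟨Finset.subset_univ _, (Finset.mem_filter.1 hX).2⟩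
      have := Finset.card_le_card this
      rw [Finset.card_powersetCard, Finset.card_univ, Fintype.card_fin] at this
      exact_mod_cast this
    have e4 : 0 ≤ 1 - c / N := by
      rw [sub_nonneg, div_le_one hN0]; exact hcN
    have e5 := mul_le_mul_of_nonneg_right e3 e4
    have e6 : N * (1 - c / N) = N - c := by field_simp
    linarith
  -- the sum over M
  have hMs : (M.card : ℝ) / 3 ≤ c * ∑ X ∈ M,
      (1 - 1 / (X.card : ℝ) - 1 / ((n - X.card : ℕ) : ℝ)) * (1 / n.choose X.card) := by
    rw [Finset.mul_sum, div_eq_mul_one_div, ← nsmul_eq_mul]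
    apply Finset.card_nsmul_le_sum
    intro X hX
    rw [hM] at hX
    obtain ⟨_, A, hA, B, hB, h1, h2⟩ := Finset.mem_filter.1 hX
    have ha0 : 1 ≤ A.card := Finset.card_pos.2
      (Finset.nonempty_iff_ne_empty.2 (fun h => hempty (h ▸ hA)))
    have hb0 : B.card < n := by
      have : B.card < Fintype.card (Fin n) :=
        (Finset.card_lt_iff_ne_univ _).2 (fun h => huniv (h ▸ hB))
      simpa using this
    have g1 := Finset.card_lt_card h1
    have g2 := Finset.card_lt_card h2
    obtain ⟨k, hk⟩ : ∃ k, k = X.card := ⟨_, rfl⟩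
    rw [← hk] at g1 g2 ⊢
    obtain ⟨l, hl⟩ : ∃ l, l = n - k := ⟨_, rfl⟩
    rw [← hl]
    have hk2 : 2 ≤ k := by omega
    have hl2 : 2 ≤ l := by omega
    have hkl : 8 ≤ k + l := by omega
    have hp : (0:ℝ) < n.choose k := by exact_mod_cast Nat.choose_pos (by omega)
    have hk2' : (2:ℝ) ≤ k := by exact_mod_cast hk2
    have hl2' : (2:ℝ) ≤ l := by exact_mod_cast hl2
    have hkl' : (8:ℝ) ≤ k + l := by exact_mod_cast hkl
    by_cases hmid : k = n / 2
    · have hk4 : (4:ℝ) ≤ k := by exact_mod_cast (by omega : 4 ≤ k)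
      have hkl4 : (k:ℝ) ≤ l := by exact_mod_cast (by omega : k ≤ l)
      have hch := Nat.choose_succ_right_eq n k
      rw [← hl] at hch
      have hch' : c * (k + 1) = n.choose k * l := by
        rw [hc, ← hmid]; exact_mod_cast hch
      have hr : c * (1 / n.choose k) = l / (k + 1) := by
        field_simp; linarith
      have hr2 : (4:ℝ)/5 ≤ l / (k+1) := by
        rw [div_le_div_iff₀ (by norm_num) (by positivity)]; nlinarith
      have i1 : 1 / (k:ℝ) ≤ 1/4 := one_div_le_one_div_of_le (by norm_num) hk4
      have i2 : 1 / (l:ℝ) ≤ 1/4 := one_div_le_one_div_of_le (by norm_num) (hk4.trans hkl4)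
      calc (1:ℝ)/3 ≤ (1/2) * (4/5) := by norm_num
        _ ≤ (1 - 1 / (k:ℝ) - 1 / (l:ℝ)) * (l / (k+1)) :=
          mul_le_mul (by linarith) hr2 (by norm_num) (by linarith)
        _ = _ := by rw [← hr]; ring
    · have hcc : (n.choose k : ℝ) ≤ c := by rw [hc]; exact_mod_cast bf_choose_le n _ hmid
      have hr2 : (1:ℝ) ≤ c * (1 / n.choose k) := by
        rw [mul_one_div, le_div_iff₀ hp]; linarith
      have i3 : (1:ℝ)/3 ≤ 1 - 1 / (k:ℝ) - 1 / (l:ℝ) := by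
        have : 1 - 1 / (k:ℝ) - 1 / (l:ℝ) = (k * l - l - k) / (k * l) := by
          field_simp
        rw [this, div_le_div_iff₀ (by norm_num) (by positivity)]
        nlinarith [mul_nonneg (sub_nonneg.2 hk2') (sub_nonneg.2 hl2')]
      calc (1:ℝ)/3 ≤ (1/3) * 1 := by norm_num
        _ ≤ (1 - 1 / (k:ℝ) - 1 / (l:ℝ)) * (c * (1 / n.choose k)) :=
          mul_le_mul i3 hr2 (by norm_num) (by linarith)
        _ = _ := by ring
  have hs' := mul_le_mul_of_nonneg_left hs hc0.le
  have hS : (Sigma2 n : ℝ) = N + c := by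
    rw [Sigma2, hN, hc]; push_cast; rfl
  rw [hS]
  linarith
end

section
/- For all reals ε ∈ (0,1), δ ∈ (0,1) and γ ∈ (0,1) there exists n₀ such that the following holds for every n ≥ n₀: for every integer k with n/2 − √n ≤ k ≤ n/2 + √n, every integer m with 1 ≤ m ≤ 2^(n^(1−γ)), and every family F ⊆ {S ⊆ [n] : |S| = k} with |F| = C(n,k) − m, the number of sets G ⊆ [n] with |G| ≥ k+1 such that |{A ∈ F : A ⊊ G}| < (1−ε)k is at most δ·m. -/
attribute [local instance] Classical.propDecidable

def levelFam (n k : ℕ) : Finset (Finset (Fin n)) :=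
  Finset.univ.filter (fun S => S.card = k)

def edg {n : ℕ} (U : Finset (Finset (Fin n))) (S : Finset (Fin n)) : Finset (Fin n) :=
  S.filter (fun i => S.erase i ∈ U)

theorem edge_iso {n : ℕ} (N : ℕ) : ∀ U : Finset (Finset (Fin n)), U.card = N →
    ∑ S ∈ U, (edg U S).card ≤ N * Nat.log 2 N := by
  induction N using Nat.strong_induction_on with
  | _ N ih =>
    intro U hU
    by_cases h1 : U.card ≤ 1
    · have : ∑ S ∈ U, (edg U S).card = 0 := by
        apply Finset.sum_eq_zero
        intro S hS
        rw [Finset.card_eq_zero]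
        unfold edg
        apply Finset.filter_eq_empty_iff.2
        intro i hi h
        have := Finset.card_le_one.1 h1 _ h _ hS
        have h2 : i ∈ S.erase i := by rw [this]; exact hi
        exact Finset.notMem_erase i S h2
      omega
    · obtain ⟨A, hA, B, hB, hAB⟩ := Finset.one_lt_card.1 (not_le.1 h1)
      have hi : ∃ i, ¬ (i ∈ A ↔ i ∈ B) := by
        by_contra h
        push Not at h
        exact hAB (Finset.ext h)
      obtain ⟨i, hi⟩ := hi
      set U1 := U.filter (fun S => i ∈ S) with hU1
      set U0 := U.filter (fun S => ¬ i ∈ S) with hU0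
      have hsum : U1.card + U0.card = U.card := Finset.card_filter_add_card_filter_not _
      have hp1 : 0 < U1.card := by
        apply Finset.card_pos.2
        by_cases h : i ∈ A
        · exact ⟨A, by simp [hU1, hA, h]⟩
        · exact ⟨B, by simp only [hU1, Finset.mem_filter]; tauto⟩
      have hp0 : 0 < U0.card := by
        apply Finset.card_pos.2
        by_cases h : i ∈ A
        · exact ⟨B, by simp only [hU0, Finset.mem_filter]; tauto⟩
        · exact ⟨A, by simp [hU0, hA, h]⟩
      have e1 := ih U1.card (by omega) U1 rfl
      have e0 := ih U0.card (by omega) U0 rfl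
      set X := U1.filter (fun S => S.erase i ∈ U0) with hX
      have x1 : X.card ≤ U1.card := Finset.card_filter_le _ _
      have x0 : X.card ≤ U0.card := by
        apply Finset.card_le_card_of_injOn (fun S => S.erase i)
        · intro S hS
          exact (Finset.mem_filter.1 hS).2
        · intro S hS T hT h
          have hS' : i ∈ S := (Finset.mem_filter.1 (Finset.mem_filter.1 hS).1).2
          have hT' : i ∈ T := (Finset.mem_filter.1 (Finset.mem_filter.1 hT).1).2
          have h' : S.erase i = T.erase i := h
          rw [← Finset.insert_erase hS', ← Finset.insert_erase hT', h']
      have key : ∑ S ∈ U, (edg U S).card ≤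
          ∑ S ∈ U1, (edg U1 S).card + ∑ S ∈ U0, (edg U0 S).card + X.card := by
        rw [← Finset.sum_filter_add_sum_filter_not U (fun S => i ∈ S)]
        have a0 : ∑ S ∈ U0, (edg U S).card ≤ ∑ S ∈ U0, (edg U0 S).card := by
          apply Finset.sum_le_sum
          intro S hS
          apply Finset.card_le_card
          intro j hj
          simp only [edg, hU0, Finset.mem_filter, Finset.mem_erase] at *
          tauto
        have a1 : ∑ S ∈ U1, (edg U S).card ≤ ∑ S ∈ U1, (edg U1 S).card + X.card := by
          rw [hX, Finset.card_filter, ← Finset.sum_add_distrib]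
          apply Finset.sum_le_sum
          intro S hS
          split_ifs with h
          · have : edg U S ⊆ insert i (edg U1 S) := by
              intro j hj
              simp only [edg, hU1, Finset.mem_filter, Finset.mem_erase, Finset.mem_insert] at *
              by_cases hji : j = i
              · exact Or.inl hji
              · exact Or.inr ⟨hj.1, hj.2, fun h => hji h.symm, hS.2⟩
            exact (Finset.card_le_card this).trans (Finset.card_insert_le _ _)
          · apply Finset.card_le_card
            intro j hj
            simp only [edg, hU1, hU0, Finset.mem_filter, Finset.mem_erase] at *
            by_cases hji : j = i
            · subst hji
              exact absurd ⟨hj.2, by simp⟩ h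
            · exact ⟨hj.1, hj.2, fun h => hji h.symm, hS.2⟩
        have := Nat.add_le_add a1 a0
        simp only [hU1, hU0] at this ⊢
        omega
      have gen : ∀ a b x : ℕ, 0 < a → a ≤ b → x ≤ a →
          a * Nat.log 2 a + b * Nat.log 2 b + x ≤ (a + b) * Nat.log 2 (a + b) := by
        intro a b x ha hab hx
        have l1 : Nat.log 2 a + 1 ≤ Nat.log 2 (a + b) := by
          rw [← Nat.log_mul_base (by norm_num) (by omega)]
          exact Nat.log_mono_right (by omega)
        have l2 : Nat.log 2 b ≤ Nat.log 2 (a + b) := Nat.log_mono_right (by omega)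
        have m1 := Nat.mul_le_mul_left a l1
        have m2 := Nat.mul_le_mul_left b l2
        nlinarith
      rw [← hU, ← hsum]
      rcases le_total U1.card U0.card with h | h
      · have := gen _ _ _ hp1 h x1
        omega
      · have := gen _ _ _ hp0 h x0
        rw [add_comm U1.card]
        omega

theorem exists_lower {n : ℕ} (B : Finset (Finset (Fin n))) (j : ℕ) (hj : j ≤ B.card) :
    ∃ B' ⊆ B, B'.card = j ∧ ∀ G ∈ B', ∀ i ∈ G, G.erase i ∈ B → G.erase i ∈ B' := by
  induction hj using Nat.decreasingInduction with
  | self => exact ⟨B, subset_rfl, rfl, fun _ _ _ _ h => h⟩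
  | of_succ j hj ih =>
    obtain ⟨B', hB, hc, hl⟩ := ih
    have hne : B'.Nonempty := Finset.card_pos.1 (by omega)
    obtain ⟨T, hT, hmax⟩ := Finset.exists_max_image B' Finset.card hne
    refine ⟨B'.erase T, (Finset.erase_subset _ _).trans hB, ?_, ?_⟩
    · rw [Finset.card_erase_of_mem hT, hc]; rfl
    · intro G hG i hi h
      have hG' := Finset.mem_of_mem_erase hG
      refine Finset.mem_erase.2 ⟨?_, hl G hG' i hi h⟩
      intro he
      have h1 := hmax G hG'
      rw [← he] at h1
      have := Finset.card_erase_lt_of_mem hi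
      omega

theorem asym (c γ : ℝ) (hc : 0 < c) (hγ : 0 < γ) :
    ∃ n₀ : ℕ, ∀ n : ℕ, n₀ ≤ n → 16 ≤ n ∧ (n : ℝ) ^ (1 - γ) + 1 ≤ 2 * c * n := by
  have h1 : Filter.Tendsto (fun n : ℕ => (n : ℝ) ^ (-γ)) Filter.atTop (nhds 0) :=
    (tendsto_rpow_neg_atTop hγ).comp tendsto_natCast_atTop_atTop
  have h2 : ∀ᶠ n : ℕ in Filter.atTop, (n : ℝ) ^ (-γ) < c := h1.eventually_lt_const hc
  have h3 : ∀ᶠ n : ℕ in Filter.atTop, 1 / c ≤ (n : ℝ) :=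
    tendsto_natCast_atTop_atTop.eventually_ge_atTop _
  obtain ⟨n₀, h⟩ := Filter.eventually_atTop.1 (h2.and (h3.and (Filter.eventually_ge_atTop 16)))
  refine ⟨n₀, fun n hn => ?_⟩
  obtain ⟨a, b, d⟩ := h n hn
  refine ⟨d, ?_⟩
  have hn0 : (0 : ℝ) < n := by
    have : 0 < n := by omega
    exact_mod_cast this
  rw [sub_eq_add_neg, Real.rpow_add hn0, Real.rpow_one]
  rw [div_le_iff₀ hc] at b
  nlinarith

/-- If `F` consists of all but `m` of the `k`-subsets of `[n]` (with `k` close to `n/2` and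
`m ≤ 2^(n^(1−γ))`), then the number of sets `G` of size `≥ k+1` containing fewer than
`(1−ε)k` members of `F` is at most `δ·m`. -/
theorem few_bad_supersets (ε δ γ : ℝ) (hε : 0 < ε ∧ ε < 1) (hδ : 0 < δ ∧ δ < 1)
    (hγ : 0 < γ ∧ γ < 1) :
    ∃ n₀ : ℕ, ∀ n : ℕ, n₀ ≤ n → ∀ k : ℕ,
      (n : ℝ) / 2 - Real.sqrt n ≤ (k : ℝ) → (k : ℝ) ≤ (n : ℝ) / 2 + Real.sqrt n →
      ∀ m : ℕ, 1 ≤ m → (m : ℝ) ≤ (2 : ℝ) ^ ((n : ℝ) ^ (1 - γ)) →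
      ∀ F : Finset (Finset (Fin n)), F ⊆ levelFam n k → F.card + m = n.choose k →
      (((Finset.univ.filter (fun G : Finset (Fin n) =>
          k + 1 ≤ G.card ∧ ((F.filter (fun A => A ⊂ G)).card : ℝ) < (1 - ε) * k)).card : ℝ)
        ≤ δ * m) := by
  obtain ⟨n₀, hn₀⟩ := asym (δ * ε / 16) γ (by have := mul_pos hδ.1 hε.1; positivity) hγ.1
  refine ⟨n₀, fun n hn k hk1 _ m hm hm2 F hF hFm => ?_⟩
  obtain ⟨h16, has⟩ := hn₀ n hn
  set B := Finset.univ.filter (fun G : Finset (Fin n) =>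
          k + 1 ≤ G.card ∧ ((F.filter (fun A => A ⊂ G)).card : ℝ) < (1 - ε) * k) with hB
  by_contra hcon
  push Not at hcon
  have hmpos : (0 : ℝ) < m := by exact_mod_cast hm
  have hn16 : (16 : ℝ) ≤ n := by exact_mod_cast h16
  have hk4 : (n : ℝ) / 4 ≤ k := by
    have hs := Real.sq_sqrt (show (0 : ℝ) ≤ n by positivity)
    have h4 : (4 : ℝ) ≤ Real.sqrt n := Real.le_sqrt_of_sq_le (by linarith)
    nlinarith
  have hk0 : (0 : ℝ) < k := by linarith
  set j := ⌊δ * m⌋₊ + 1 with hj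
  have hjB : j ≤ B.card := by
    have : ⌊δ * m⌋₊ < B.card := (Nat.floor_lt (by have := hδ.1; positivity)).2 hcon
    omega
  have hjm : j ≤ m := by
    have : ⌊δ * m⌋₊ < m := (Nat.floor_lt (by have := hδ.1; positivity)).2 (by nlinarith [hδ.2])
    omega
  have hjd : δ * m < j := by rw [hj]; push_cast; exact Nat.lt_floor_add_one _
  obtain ⟨B', hB'B, hB'c, hl⟩ := exists_lower B j hjB
  set M := levelFam n k \ F with hM
  have hMc : M.card = m := by
    have h1 : (levelFam n k).card = n.choose k := by
      have : levelFam n k = Finset.powersetCard k Finset.univ := by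
        ext S; simp [levelFam, Finset.mem_powersetCard]
      rw [this, Finset.card_powersetCard]; simp
    rw [hM, Finset.card_sdiff_of_subset hF]; omega
  set U := M ∪ B' with hU
  have hUc : U.card ≤ 2 * m := by
    have : U.card ≤ M.card + B'.card := Finset.card_union_le _ _
    omega
  have hdeg : ∀ G ∈ B', ε * k ≤ ((edg U G).card : ℝ) := by
    intro G hG
    have hGB := hB'B hG
    rw [hB, Finset.mem_filter] at hGB
    obtain ⟨-, hc, hf⟩ := hGB
    rcases hc.eq_or_lt with hc | hc
    · have hcov : G ⊆ edg U G ∪ G.filter (fun i => G.erase i ∈ F) := by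
        intro i hi
        by_cases h : G.erase i ∈ F
        · exact Finset.mem_union_right _ (Finset.mem_filter.2 ⟨hi, h⟩)
        · refine Finset.mem_union_left _ (Finset.mem_filter.2 ⟨hi, ?_⟩)
          refine Finset.mem_union_left _ (Finset.mem_sdiff.2 ⟨?_, h⟩)
          simp only [levelFam, Finset.mem_filter, Finset.mem_univ, true_and]
          rw [Finset.card_erase_of_mem hi]; omega
      have h1 := (Finset.card_le_card hcov).trans (Finset.card_union_le _ _)
      have h2 : (G.filter (fun i => G.erase i ∈ F)).card ≤ (F.filter (fun A => A ⊂ G)).card := by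
        apply Finset.card_le_card_of_injOn (fun i => G.erase i)
        · intro i hi
          have hi := Finset.mem_filter.1 hi
          exact Finset.mem_filter.2 ⟨hi.2, Finset.erase_ssubset hi.1⟩
        · intro a ha b hb h
          have ha := (Finset.mem_filter.1 ha).1
          exact Finset.erase_injOn G ha ((Finset.mem_filter.1 hb).1) h
      have h3 : k + 1 ≤ (edg U G).card + (F.filter (fun A => A ⊂ G)).card := by omega
      have h4 : (k : ℝ) + 1 ≤ (edg U G).card + (F.filter (fun A => A ⊂ G)).card := by
        exact_mod_cast h3
      linarith
    · have : edg U G = G := by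
        apply Finset.filter_true_of_mem
        intro i hi
        refine Finset.mem_union_right _ (hl G hG i hi ?_)
        rw [hB, Finset.mem_filter]
        refine ⟨Finset.mem_univ _, ?_, ?_⟩
        · rw [Finset.card_erase_of_mem hi]; omega
        · refine lt_of_le_of_lt ?_ hf
          norm_cast
          apply Finset.card_le_card
          intro A hA
          have hA := Finset.mem_filter.1 hA
          exact Finset.mem_filter.2 ⟨hA.1, hA.2.trans_subset (Finset.erase_subset _ _)⟩
      rw [this]
      have : (k : ℝ) ≤ G.card := by exact_mod_cast (by omega : k ≤ G.card)
      nlinarith [hε.2]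
  have hlow : (j : ℝ) * (ε * k) ≤ ((∑ S ∈ U, (edg U S).card : ℕ) : ℝ) := by
    push_cast
    calc (j : ℝ) * (ε * k) = ∑ S ∈ B', ε * k := by simp [hB'c]
      _ ≤ ∑ S ∈ B', ((edg U S).card : ℝ) := Finset.sum_le_sum hdeg
      _ ≤ _ := Finset.sum_le_sum_of_subset_of_nonneg Finset.subset_union_right
          (fun _ _ _ => by positivity)
  have hup : ∑ S ∈ U, (edg U S).card ≤ (2 * m) * Nat.log 2 (2 * m) :=
    (edge_iso _ U rfl).trans (Nat.mul_le_mul hUc (Nat.log_mono_right hUc))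
  have hlog : (Nat.log 2 (2 * m) : ℝ) ≤ (n : ℝ) ^ (1 - γ) + 1 := by
    have h1 : (2 : ℝ) ^ ((Nat.log 2 (2 * m) : ℕ) : ℝ) ≤ (2 : ℝ) ^ ((n : ℝ) ^ (1 - γ) + 1) := by
      rw [Real.rpow_natCast, Real.rpow_add (by norm_num), Real.rpow_one]
      have : 2 ^ Nat.log 2 (2 * m) ≤ 2 * m := Nat.pow_log_le_self 2 (by omega)
      have : (2 : ℝ) ^ Nat.log 2 (2 * m) ≤ 2 * m := by exact_mod_cast this
      linarith
    exact (Real.rpow_le_rpow_left_iff (by norm_num)).1 h1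
  have hup' : ((∑ S ∈ U, (edg U S).card : ℕ) : ℝ) ≤ (2 * m) * (Nat.log 2 (2 * m) : ℝ) := by
    exact_mod_cast hup
  have hεk : 0 < ε * k := mul_pos hε.1 hk0
  have c1 : δ * m * (ε * k) < 2 * m * (2 * (δ * ε / 16) * n) :=
    calc δ * m * (ε * k) < j * (ε * k) := by exact mul_lt_mul_of_pos_right hjd hεk
      _ ≤ 2 * m * (Nat.log 2 (2 * m) : ℝ) := hlow.trans hup'
      _ ≤ 2 * m * (2 * (δ * ε / 16) * n) :=
        mul_le_mul_of_nonneg_left (hlog.trans has) (by positivity)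
  have c2 : δ * m * ε * (n / 4) ≤ δ * m * ε * k :=
    mul_le_mul_of_nonneg_left hk4 (by have := hδ.1; have := hε.1; positivity)
  nlinarith
end

section
/- Let n ≥ 1 and 1 ≤ k ≤ n−1 be integers and δ ∈ (0,1] a real. If F ⊆ {S ⊆ [n] : |S| = k} has |F| = m and m < C(⌊δn⌋, ⌊δn/2⌋), then the number of unordered pairs {A,B} of distinct members of F with |A ∩ B| = k−1 is at most δ·m·n². -/
attribute [local instance] Classical.propDecidable

def hebE (n k : ℕ) (F : Finset (Finset (Fin n))) : Finset (Finset (Finset (Fin n))) :=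
  (F.powersetCard 2).filter (fun P => ∃ A ∈ P, ∃ B ∈ P, A ≠ B ∧ (A ∩ B).card = k - 1)

def hebC (n k : ℕ) (F G : Finset (Finset (Fin n))) : Finset (Finset (Fin n) × Finset (Fin n)) :=
  (F ×ˢ G).filter (fun p => (p.1 ∩ p.2).card = k - 1)

lemma heb_inter {n k : ℕ} (x : Fin n) (A B : Finset (Fin n)) (hA : A.card = k)
    (hxA : x ∈ A) (hxB : x ∉ B) (h : (A ∩ B).card = k - 1) : A ∩ B = A.erase x := by
  apply Finset.eq_of_subset_of_card_le
  · intro y hy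
    simp only [Finset.mem_inter, Finset.mem_erase] at *
    exact ⟨fun e => hxB (e ▸ hy.2), hy.1⟩
  · rw [Finset.card_erase_of_mem hxA, h, hA]

lemma heb_pair {n k : ℕ} (hk : 1 ≤ k) (x : Fin n) (A B : Finset (Fin n)) (hA : A.card = k)
    (hB : B.card = k)
    (hxA : x ∈ A) (hxB : x ∉ B) (h : (A ∩ B).card = k - 1) :
    ∃ y, B = insert y (A.erase x) ∧ A = insert x (B.erase y) := by
  have h1 := heb_inter x A B hA hxA hxB h
  have h2 : A.erase x ⊆ B := by rw [← h1]; exact Finset.inter_subset_right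
  have h3 : (B \ A.erase x).card = 1 := by
    rw [Finset.card_sdiff_of_subset h2, Finset.card_erase_of_mem hxA]; omega
  obtain ⟨y, hy⟩ := Finset.card_eq_one.1 h3
  have hy' : ∀ z, (z ∈ B ∧ z ∉ A.erase x) ↔ z = y := by
    intro z
    rw [← Finset.mem_sdiff, hy, Finset.mem_singleton]
  have e1 : B = insert y (A.erase x) := by
    ext z
    have := hy' z
    have h4 := @h2 z
    simp only [Finset.mem_insert]
    tauto
  refine ⟨y, e1, ?_⟩
  have hyn : y ∉ A.erase x := ((hy' y).2 rfl).2
  rw [e1, Finset.erase_insert hyn, Finset.insert_erase hxA]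

lemma heb_cross {n k : ℕ} (hk : 1 ≤ k) (x : Fin n) (F G : Finset (Finset (Fin n)))
    (hF : ∀ A ∈ F, A.card = k ∧ x ∈ A) (hG : ∀ A ∈ G, A.card = k ∧ x ∉ A) :
    (hebC n k F G).card ≤ F.card * n ∧ (hebC n k F G).card ≤ G.card * n := by
  constructor
  · have : hebC n k F G ⊆ (F ×ˢ (Finset.univ : Finset (Fin n))).image
        (fun p => (p.1, insert p.2 (p.1.erase x))) := by
      rintro ⟨A, B⟩ h
      simp only [hebC, Finset.mem_filter, Finset.mem_product] at h
      obtain ⟨⟨hA, hB⟩, h⟩ := h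
      obtain ⟨y, h1, h2⟩ := heb_pair hk x A B (hF A hA).1 (hG B hB).1 (hF A hA).2 (hG B hB).2 h
      refine Finset.mem_image.2 ⟨(A, y), by simp [hA], ?_⟩
      simp only [← h1]
    refine (Finset.card_le_card this).trans (Finset.card_image_le.trans ?_)
    simp
  · have : hebC n k F G ⊆ (G ×ˢ (Finset.univ : Finset (Fin n))).image
        (fun p => (insert x (p.1.erase p.2), p.1)) := by
      rintro ⟨A, B⟩ h
      simp only [hebC, Finset.mem_filter, Finset.mem_product] at h
      obtain ⟨⟨hA, hB⟩, h⟩ := h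
      obtain ⟨y, h1, h2⟩ := heb_pair hk x A B (hF A hA).1 (hG B hB).1 (hF A hA).2 (hG B hB).2 h
      refine Finset.mem_image.2 ⟨(B, y), by simp [hB], ?_⟩
      simp only [← h2]
    refine (Finset.card_le_card this).trans (Finset.card_image_le.trans ?_)
    simp

lemma heb_split {n k : ℕ} (x : Fin n) (F : Finset (Finset (Fin n))) :
    (hebE n k F).card ≤ (hebE n k (F.filter (fun A => x ∈ A))).card
      + (hebE n k (F.filter (fun A => x ∉ A))).card
      + (hebC n k (F.filter (fun A => x ∈ A)) (F.filter (fun A => x ∉ A))).card := by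
  have : hebE n k F ⊆ (hebE n k (F.filter (fun A => x ∈ A))
      ∪ hebE n k (F.filter (fun A => x ∉ A)))
      ∪ (hebC n k (F.filter (fun A => x ∈ A)) (F.filter (fun A => x ∉ A))).image
        (fun p => {p.1, p.2}) := by
    intro P hP
    simp only [hebE, Finset.mem_filter, Finset.mem_powersetCard] at hP
    obtain ⟨⟨hPF, hP2⟩, A, hA, B, hB, hAB, h⟩ := hP
    have hPe : P = {A, B} := by
      symm
      apply Finset.eq_of_subset_of_card_le
      · intro z hz
        simp only [Finset.mem_insert, Finset.mem_singleton] at hz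
        rcases hz with rfl | rfl <;> assumption
      · rw [Finset.card_pair hAB, hP2]
    have hAF := hPF hA
    have hBF := hPF hB
    simp only [Finset.mem_union]
    by_cases h1 : x ∈ A <;> by_cases h2 : x ∈ B
    · left; left
      simp only [hebE, Finset.mem_filter, Finset.mem_powersetCard]
      refine ⟨⟨?_, hP2⟩, A, hA, B, hB, hAB, h⟩
      intro z hz
      rw [hPe] at hz
      simp only [Finset.mem_insert, Finset.mem_singleton] at hz
      rcases hz with rfl | rfl <;> simp [*]
    · right
      refine Finset.mem_image.2 ⟨(A, B), ?_, hPe.symm⟩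
      simp [hebC, *]
    · right
      refine Finset.mem_image.2 ⟨(B, A), ?_, by rw [hPe]; exact Finset.pair_comm _ _⟩
      rw [Finset.inter_comm] at h
      simp [hebC, *]
    · left; right
      simp only [hebE, Finset.mem_filter, Finset.mem_powersetCard]
      refine ⟨⟨?_, hP2⟩, A, hA, B, hB, hAB, h⟩
      intro z hz
      rw [hPe] at hz
      simp only [Finset.mem_insert, Finset.mem_singleton] at hz
      rcases hz with rfl | rfl <;> simp [*]
  refine (Finset.card_le_card this).trans ((Finset.card_union_le _ _).trans ?_)
  exact add_le_add (Finset.card_union_le _ _) Finset.card_image_le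

lemma heb_log (a b : ℝ) (ha : 0 < a) (hab : a ≤ b) :
    a * Real.logb 2 a + b * Real.logb 2 b + a ≤ (a + b) * Real.logb 2 (a + b) := by
  have h1 : Real.logb 2 a + 1 ≤ Real.logb 2 (a + b) := by
    have : Real.logb 2 (a * 2) = Real.logb 2 a + 1 := by
      rw [Real.logb_mul ha.ne' (by norm_num), Real.logb_self_eq_one (by norm_num)]
    rw [← this]
    exact Real.logb_le_logb_of_le (by norm_num) (by positivity) (by linarith)
  have h2 : Real.logb 2 b ≤ Real.logb 2 (a + b) :=
    Real.logb_le_logb_of_le (by norm_num) (by linarith) (by linarith)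
  nlinarith [mul_le_mul_of_nonneg_left h1 ha.le,
    mul_le_mul_of_nonneg_left h2 (ha.le.trans hab)]

lemma heb_main {n k : ℕ} (hk : 1 ≤ k) : ∀ (m : ℕ) (F : Finset (Finset (Fin n))),
    F.card = m → (∀ A ∈ F, A.card = k) →
    ((hebE n k F).card : ℝ) ≤ n * (m * Real.logb 2 m) := by
  intro m
  induction m using Nat.strong_induction_on with
  | _ m ih =>
  intro F hFm hF
  rcases Nat.lt_or_ge m 2 with hm | hm
  · have : hebE n k F = ∅ := by
      rw [hebE, Finset.powersetCard_eq_empty.2 (by omega)]; rfl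
    rw [this]
    interval_cases m <;> simp
  · obtain ⟨A, hA, B, hB, hAB⟩ := Finset.one_lt_card.1 (by omega : 1 < F.card)
    obtain ⟨x, hx⟩ : ∃ x, ¬ (x ∈ A ↔ x ∈ B) := by
      by_contra hc
      push Not at hc
      exact hAB (Finset.ext hc)
    set F1 := F.filter (fun A => x ∈ A) with hF1
    set F0 := F.filter (fun A => x ∉ A) with hF0
    have hsum : F1.card + F0.card = m := by
      rw [← hFm]; exact Finset.card_filter_add_card_filter_not _
    have hne : 0 < F1.card ∧ 0 < F0.card := by
      simp only [Finset.card_pos]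
      by_cases h1 : x ∈ A
      · exact ⟨⟨A, by simp [hF1, *]⟩, ⟨B, by simp only [hF0, Finset.mem_filter]; tauto⟩⟩
      · exact ⟨⟨B, by simp only [hF1, Finset.mem_filter]; tauto⟩, ⟨A, by simp [hF0, *]⟩⟩
    have i1 := ih F1.card (by omega) F1 rfl (fun A hA => hF A (Finset.mem_filter.1 hA).1)
    have i0 := ih F0.card (by omega) F0 rfl (fun A hA => hF A (Finset.mem_filter.1 hA).1)
    have hs : (hebE n k F).card ≤ (hebE n k F1).card + (hebE n k F0).card
      + (hebC n k F1 F0).card := heb_split x F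
    obtain ⟨c1, c0⟩ := heb_cross hk x F1 F0
      (fun A hA => ⟨hF A (Finset.mem_filter.1 hA).1, (Finset.mem_filter.1 hA).2⟩)
      (fun A hA => ⟨hF A (Finset.mem_filter.1 hA).1, (Finset.mem_filter.1 hA).2⟩)
    have hsR : ((hebE n k F).card : ℝ) ≤ (hebE n k F1).card + (hebE n k F0).card
      + (hebC n k F1 F0).card := by exact_mod_cast hs
    have c1R : ((hebC n k F1 F0).card : ℝ) ≤ F1.card * n := by exact_mod_cast c1
    have c0R : ((hebC n k F1 F0).card : ℝ) ≤ F0.card * n := by exact_mod_cast c0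
    have hmR : (m : ℝ) = F1.card + F0.card := by exact_mod_cast hsum.symm
    have p1 : (0 : ℝ) < F1.card := by exact_mod_cast hne.1
    have p0 : (0 : ℝ) < F0.card := by exact_mod_cast hne.2
    have hn0 : (0 : ℝ) ≤ n := Nat.cast_nonneg n
    rw [hmR]
    rcases le_total (F1.card : ℝ) F0.card with h | h
    · have := mul_le_mul_of_nonneg_left (heb_log _ _ p1 h) hn0
      linarith
    · have := mul_le_mul_of_nonneg_left (heb_log _ _ p0 h) hn0
      rw [add_comm (F1.card : ℝ)]
      linarith

/-- Isoperimetric bound in the Hamming graph `H(n,k)`: a family `F` of `m < C(⌊δn⌋,⌊δn/2⌋)`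
`k`-subsets of `[n]` spans at most `δ·m·n²` pairs intersecting in `k−1` elements. -/
theorem hamming_edges_bound (n k : ℕ) (hn : 1 ≤ n) (hk1 : 1 ≤ k) (hk2 : k ≤ n - 1)
    (δ : ℝ) (hδ : 0 < δ ∧ δ ≤ 1) (F : Finset (Finset (Fin n))) (hF : F ⊆ levelFam n k)
    (m : ℕ) (hm : F.card = m)
    (hsmall : m < Nat.choose ⌊δ * (n : ℝ)⌋₊ ⌊δ * (n : ℝ) / 2⌋₊) :
    (((F.powersetCard 2).filter (fun P =>
        ∃ A ∈ P, ∃ B ∈ P, A ≠ B ∧ (A ∩ B).card = k - 1)).card : ℝ)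
      ≤ δ * m * (n : ℝ) ^ 2 := by
  have h := heb_main hk1 m F hm (fun A hA => by
    have := hF hA
    simpa [levelFam] using this)
  have hE : ((hebE n k F).card : ℝ) ≤ δ * m * (n : ℝ) ^ 2 := by
    refine h.trans ?_
    rcases Nat.eq_zero_or_pos m with h0 | hpos
    · simp [h0]
    have hpR : (0 : ℝ) < m := by exact_mod_cast hpos
    have hl : Real.logb 2 m ≤ δ * n := by
      have h2 : m ≤ 2 ^ ⌊δ * (n : ℝ)⌋₊ := hsmall.le.trans (Nat.choose_le_two_pow _ _)
      have h2R : (m : ℝ) ≤ 2 ^ ⌊δ * (n : ℝ)⌋₊ := by exact_mod_cast h2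
      have h3 : Real.logb 2 m ≤ ⌊δ * (n : ℝ)⌋₊ := by
        rw [Real.logb_le_iff_le_rpow (by norm_num) hpR, Real.rpow_natCast]
        exact h2R
      exact h3.trans (Nat.floor_le (mul_nonneg hδ.1.le (Nat.cast_nonneg n)))
    calc (n : ℝ) * (m * Real.logb 2 m) ≤ n * (m * (δ * n)) := by gcongr
      _ = _ := by ring
  exact hE
end

section
/- There exists n₀ such that the following holds for every n ≥ n₀: let k be an integer with n/2 − √n ≤ k ≤ n/2 + √n, let m be an integer with 1 ≤ m ≤ k², and let F ⊆ {S ⊆ [n] : |S| = k} with |F| = C(n,k) − m. Then (i) the number of sets G ⊆ [n] with |G| = k+1 such that |{A ∈ F : A ⊊ G}| < k + 1 − 2√m is at most √m, and (ii) the number of sets G ⊆ [n] with |G| ≥ k+1 such that |{A ∈ F : A ⊊ G}| < k + 1 − 2√m is at most 2√m. -/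
attribute [local instance] Classical.propDecidable

theorem fbs_union {α β : Type*} [DecidableEq α] [DecidableEq β] (f : α → Finset β) (c : ℝ)
    (T : Finset α) (hc : ∀ G ∈ T, c ≤ ((f G).card : ℝ))
    (hp : ∀ G ∈ T, ∀ H ∈ T, G ≠ H → (f G ∩ f H).card ≤ 1) :
    c * T.card - T.card * ((T.card : ℝ) - 1) / 2 ≤ ((T.biUnion f).card : ℝ) := by
  induction T using Finset.induction_on with
  | empty => simp
  | insert a T ha ih =>
    have ih' := ih (fun G hG => hc G (Finset.mem_insert_of_mem hG))
      (fun G hG H hH => hp G (Finset.mem_insert_of_mem hG) H (Finset.mem_insert_of_mem hH))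
    rw [Finset.card_insert_of_notMem ha, Finset.biUnion_insert]
    have h1 := Finset.card_union_add_card_inter (f a) (T.biUnion f)
    have h2 : (f a ∩ T.biUnion f).card ≤ T.card := by
      rw [Finset.inter_biUnion]
      calc _ ≤ ∑ H ∈ T, (f a ∩ f H).card := Finset.card_biUnion_le
        _ ≤ ∑ H ∈ T, 1 := Finset.sum_le_sum (fun H hH => hp a (Finset.mem_insert_self _ _) H
            (Finset.mem_insert_of_mem hH) (fun h => ha (h ▸ hH)))
        _ = T.card := by simp
    have h3 := hc a (Finset.mem_insert_self _ _)
    have h1' : ((f a ∪ T.biUnion f).card : ℝ) + ((f a ∩ T.biUnion f).card : ℝ)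
        = (f a).card + (T.biUnion f).card := by exact_mod_cast h1
    have h2' : ((f a ∩ T.biUnion f).card : ℝ) ≤ T.card := by exact_mod_cast h2
    push_cast
    linarith

/-- If `F` consists of all but `m` of the `k`-subsets of `[n]` (with `k` close to `n/2` and
`1 ≤ m ≤ k²`), then (i) at most `√m` sets of size `k+1`, and (ii) at most `2√m` sets of size
`≥ k+1`, contain fewer than `k+1−2√m` members of `F`. -/
theorem few_bad_supersets_sharp :
    ∃ n₀ : ℕ, ∀ n : ℕ, n₀ ≤ n → ∀ k m : ℕ,
      (n : ℝ) / 2 - Real.sqrt n ≤ (k : ℝ) → (k : ℝ) ≤ (n : ℝ) / 2 + Real.sqrt n →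
      1 ≤ m → m ≤ k ^ 2 →
      ∀ F : Finset (Finset (Fin n)), F ⊆ levelFam n k → F.card + m = n.choose k →
      (((Finset.univ.filter (fun G : Finset (Fin n) =>
            G.card = k + 1 ∧
              ((F.filter (fun A => A ⊂ G)).card : ℝ) < (k : ℝ) + 1 - 2 * Real.sqrt m)).card : ℝ)
          ≤ Real.sqrt m) ∧
      (((Finset.univ.filter (fun G : Finset (Fin n) =>
            k + 1 ≤ G.card ∧
              ((F.filter (fun A => A ⊂ G)).card : ℝ) < (k : ℝ) + 1 - 2 * Real.sqrt m)).card : ℝ)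
          ≤ 2 * Real.sqrt m) := by
  refine ⟨0, ?_⟩
  intro n _ k m _ _ hm1 hmk F hF hcard
  have hk : 1 ≤ k := by
    rcases Nat.eq_zero_or_pos k with h | h
    · subst h; omega
    · exact h
  set s := Real.sqrt m with hs
  have hss : s * s = m := Real.mul_self_sqrt (Nat.cast_nonneg m)
  have hs1 : 1 ≤ s := Real.one_le_sqrt.mpr (by exact_mod_cast hm1)
  have hlev : levelFam n k = Finset.powersetCard k Finset.univ := by
    ext A; simp [levelFam, Finset.mem_powersetCard]
  have hM : (levelFam n k \ F).card = m := by
    rw [Finset.card_sdiff_of_subset hF, hlev, Finset.card_powersetCard, Finset.card_univ,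
      Fintype.card_fin]
    omega
  have hsplit : ∀ G : Finset (Fin n), k + 1 ≤ G.card →
      (F.filter (fun A => A ⊂ G)).card + ((levelFam n k \ F).filter (fun A => A ⊂ G)).card
        = G.card.choose k := by
    intro G hG
    rw [← Finset.card_powersetCard, ← Finset.card_union_of_disjoint]
    · congr 1
      ext A
      have hF' := @hF A
      simp only [levelFam, Finset.mem_union, Finset.mem_filter, Finset.mem_sdiff,
        Finset.mem_powersetCard, Finset.mem_univ, true_and] at hF' ⊢
      constructor
      · rintro (⟨h1, h2⟩ | ⟨⟨h1, _⟩, h2⟩)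
        · exact ⟨h2.subset, hF' h1⟩
        · exact ⟨h2.subset, h1⟩
      · rintro ⟨h1, h2⟩
        have h3 : A ⊂ G := by
          refine Finset.ssubset_iff_subset_ne.mpr ⟨h1, ?_⟩
          rintro rfl
          omega
        tauto
    · exact Finset.disjoint_filter_filter Finset.disjoint_sdiff
  have hone : (((Finset.univ.filter (fun G : Finset (Fin n) =>
            G.card = k + 1 ∧
              ((F.filter (fun A => A ⊂ G)).card : ℝ) < (k : ℝ) + 1 - 2 * s)).card : ℝ)
          ≤ s) := by
    by_contra hcon
    push Not at hcon
    obtain ⟨T, hT, hTc⟩ := Finset.exists_subset_card_eq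
      (Nat.succ_le_of_lt ((Nat.floor_lt (by linarith)).mpr hcon))
    have hu := fbs_union (fun G => (levelFam n k \ F).filter (fun A => A ⊂ G)) (2 * s) T
      (by
        intro G hG
        obtain ⟨h1, h2⟩ := (Finset.mem_filter.mp (hT hG)).2
        have h3 := hsplit G h1.ge
        rw [h1, Nat.choose_succ_self_right] at h3
        have h4 : ((F.filter (fun A => A ⊂ G)).card : ℝ)
          + ((levelFam n k \ F).filter (fun A => A ⊂ G)).card = k + 1 := by exact_mod_cast h3
        show 2 * s ≤ (((levelFam n k \ F).filter (fun A => A ⊂ G)).card : ℝ)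
        linarith)
      (by
        intro G hG H hH hne
        have h1 := (Finset.mem_filter.mp (hT hG)).2.1
        have h2 := (Finset.mem_filter.mp (hT hH)).2.1
        have h5 : (G ∩ H).card ≤ k := by
          by_contra h
          have h6 : G ∩ H = G := Finset.eq_of_subset_of_card_le Finset.inter_subset_left (by omega)
          have h7 : G ∩ H = H := Finset.eq_of_subset_of_card_le Finset.inter_subset_right (by omega)
          exact hne (h6.symm.trans h7)
        have key : ∀ A ∈ (levelFam n k \ F).filter (fun A => A ⊂ G) ∩
            (levelFam n k \ F).filter (fun A => A ⊂ H), A = G ∩ H := by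
          intro A hA
          simp only [levelFam, Finset.mem_inter, Finset.mem_filter, Finset.mem_sdiff,
            Finset.mem_univ, true_and] at hA
          exact Finset.eq_of_subset_of_card_le
            (Finset.subset_inter hA.1.2.subset hA.2.2.subset) (by omega)
        refine Finset.card_le_one.mpr ?_
        intro A hA B hB
        rw [key A hA, key B hB])
    have hle : ((T.biUnion (fun G => (levelFam n k \ F).filter (fun A => A ⊂ G))).card : ℝ)
        ≤ m := by
      rw [← hM]
      exact_mod_cast Finset.card_le_card
        (Finset.biUnion_subset.mpr (fun G _ => Finset.filter_subset _ _))
    have ht1 : (T.card : ℝ) ≤ s + 1 := by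
      rw [hTc]; push_cast
      linarith [Nat.floor_le (show 0 ≤ s by linarith)]
    have ht2 : s < (T.card : ℝ) := by
      rw [hTc]; push_cast
      exact Nat.lt_floor_add_one s
    nlinarith
  refine ⟨hone, ?_⟩
  refine le_trans ?_ (le_trans hone (by linarith))
  refine Nat.cast_le.mpr ?_
  apply Finset.card_le_card
  intro G hG
  obtain ⟨h1, h2⟩ := (Finset.mem_filter.mp hG).2
  refine Finset.mem_filter.mpr ⟨Finset.mem_univ _, ?_, h2⟩
  by_contra hne
  have hge : k + 2 ≤ G.card := by omega
  have h3 := hsplit G h1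
  have h4 : ((levelFam n k \ F).filter (fun A => A ⊂ G)).card ≤ m := by
    rw [← hM]; exact Finset.card_le_card (Finset.filter_subset _ _)
  have h5 : (k + 2).choose k ≤ G.card.choose k := Nat.choose_le_choose k hge
  have h6 : ((k + 2).choose k : ℝ) = (k + 2) * (k + 1) / 2 := by
    rw [Nat.choose_symm_add, Nat.cast_choose_two]
    push_cast; ring
  have h7 : ((k + 2).choose k : ℝ) ≤ ((F.filter (fun A => A ⊂ G)).card : ℝ) + m := by
    exact_mod_cast (by omega : (k + 2).choose k ≤ (F.filter (fun A => A ⊂ G)).card + m)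
  have h8 : (0 : ℝ) ≤ ((F.filter (fun A => A ⊂ G)).card : ℝ) := Nat.cast_nonneg _
  have hk' : (1 : ℝ) ≤ k := by exact_mod_cast hk
  rw [h6] at h7
  have h9 : s < ((k : ℝ) + 1) / 2 := by linarith
  have h10 : s * s ≤ ((k : ℝ) + 1) / 2 * (((k : ℝ) + 1) / 2) :=
    mul_le_mul h9.le h9.le (by linarith) (by linarith)
  nlinarith
end
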